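/- arXiv:2507.20303 — 3 statements merged into one kernel-verified Lean document; each statement's English description precedes it below -/
import Mathlib

section
/- For every fixed w ∈ ℂ, the function z ↦ U_S(z,w) has vanishing spherical mean: ∫_ℂ U_S(z,w) dA_S(z) = 0. -/
open MeasureTheory

/-- The unipolar Green function of the sphere. -/
noncomputable def Usph (z w : ℂ) : ℝ :=
  1 / 2 + 1 / 2 * Real.log (‖z - w‖ ^ 2 / ((1 + ‖z‖ ^ 2) * (1 + ‖w‖ ^ 2)))

/-!
Since `U_S(z, w) = 1/2 + log [z, w]` with `[z, w]` the chordal distance, and the sphere has `dA_S`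
area `π`, the claim is that the nonnegative function `-log [·, w]` has spherical integral `π / 2`.
By Jensen's formula its average over the circle `|z| = r` is
`log (1 + r²) / 2 + log (1 + |w|²) / 2 - log (max |w| r)`, and the remaining radial integral is
elementary on each side of `r = |w|`.
-/

open Set Filter Topology Real

section CircleAverage

variable {f : ℂ → ℝ} {c : ℂ}

theorem lintegral_ofReal_circleMap {r : ℝ} (hf : 0 ≤ f) (hr : CircleIntegrable f c r) :
    ∫⁻ θ in Ioo (-π) π, ENNReal.ofReal (f (circleMap c r θ)) =
      ENNReal.ofReal (2 * π * circleAverage f c r) := by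
  have hper : Function.Periodic (fun θ ↦ f (circleMap c r θ)) (2 * π) := fun θ ↦ by
    simp only [periodic_circleMap c r θ]
  have hle : -π ≤ π := by linarith [pi_pos]
  have hint : IntegrableOn (fun θ ↦ f (circleMap c r θ)) (Ioc (-π) π) :=
    (intervalIntegrable_iff_integrableOn_Ioc_of_le hle).1
      (hper.intervalIntegrable₀ two_pi_pos.ne' hr _ _)
  have hshift : ∫ θ in (-π)..π, f (circleMap c r θ) = 2 * π * circleAverage f c r := by
    have h := hper.intervalIntegral_add_eq (-π) 0
    rw [show -π + 2 * π = π by ring, zero_add] at h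
    rw [h, circleAverage_def, smul_eq_mul, mul_inv_cancel_left₀ two_pi_pos.ne']
  rw [restrict_Ioo_eq_restrict_Ioc, ← hshift, intervalIntegral.integral_of_le hle,
    ofReal_integral_eq_lintegral_ofReal hint (Eventually.of_forall fun θ ↦ hf _)]

theorem lintegral_ofReal_eq_lintegral_circleAverage (hf : Measurable f) (hf₀ : 0 ≤ f)
    (hc : ∀ᵐ r ∂volume.restrict (Ioi 0), CircleIntegrable f c r) :
    ∫⁻ z, ENNReal.ofReal (f z) =
      ∫⁻ r in Ioi 0, ENNReal.ofReal (2 * π * r * circleAverage f c r) := by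
  have hpolar (p : ℝ × ℝ) : c + Complex.polarCoord.symm p = circleMap c p.1 p.2 := by
    simp [circleMap, Complex.exp_mul_I]
  rw [← lintegral_add_left_eq_self _ c, ← Complex.lintegral_comp_polarCoord_symm]
  simp only [hpolar, smul_eq_mul, polarCoord_target]
  rw [Measure.volume_eq_prod, setLIntegral_prod _ (by unfold circleMap; fun_prop)]
  refine lintegral_congr_ae ?_
  filter_upwards [hc, ae_restrict_mem measurableSet_Ioi] with r hr hr₀
  rw [lintegral_const_mul' _ _ ENNReal.ofReal_ne_top, lintegral_ofReal_circleMap hf₀ hr,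
    ← ENNReal.ofReal_mul (le_of_lt hr₀)]
  ring_nf

theorem integrable_of_integrableOn_circleAverage (hf : Measurable f) (hf₀ : 0 ≤ f)
    (hc : ∀ᵐ r ∂volume.restrict (Ioi 0), CircleIntegrable f c r)
    (hr : IntegrableOn (fun r ↦ 2 * π * r * circleAverage f c r) (Ioi 0)) : Integrable f := by
  refine ⟨hf.aestronglyMeasurable, ?_⟩
  rw [hasFiniteIntegral_iff_ofReal (Eventually.of_forall hf₀),
    lintegral_ofReal_eq_lintegral_circleAverage hf hf₀ hc]
  exact hr.lintegral_lt_top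

theorem integral_eq_integral_circleAverage (hf : Measurable f) (hf₀ : 0 ≤ f)
    (hc : ∀ᵐ r ∂volume.restrict (Ioi 0), CircleIntegrable f c r)
    (hr : IntegrableOn (fun r ↦ 2 * π * r * circleAverage f c r) (Ioi 0)) :
    ∫ z, f z = ∫ r in Ioi 0, 2 * π * r * circleAverage f c r := by
  have hnonneg : 0 ≤ᵐ[volume.restrict (Ioi 0)] fun r ↦ 2 * π * r * circleAverage f c r := by
    filter_upwards [ae_restrict_mem measurableSet_Ioi] with r hr₀
    have : 0 ≤ circleAverage f c r := circleAverage_nonneg_of_nonneg fun z _ ↦ hf₀ z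
    have : 0 < r := hr₀
    positivity
  rw [integral_eq_lintegral_of_nonneg_ae (Eventually.of_forall hf₀) hf.aestronglyMeasurable,
    integral_eq_lintegral_of_nonneg_ae hnonneg hr.aestronglyMeasurable,
    lintegral_ofReal_eq_lintegral_circleAverage hf hf₀ hc]

theorem eqOn_sphere_mul_fun_norm (f : ℂ → ℝ) (φ : ℝ → ℝ) (r : ℝ) :
    EqOn (fun z ↦ f z * φ ‖z‖) (fun z ↦ φ |r| • f z) (Metric.sphere 0 |r|) := fun z hz ↦ by
  simp only [mem_sphere_zero_iff_norm.1 hz, smul_eq_mul, mul_comm]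

theorem circleIntegrable_mul_fun_norm {r : ℝ} (hf : CircleIntegrable f 0 r) (φ : ℝ → ℝ) :
    CircleIntegrable (fun z ↦ f z * φ ‖z‖) 0 r :=
  (circleIntegrable_congr (eqOn_sphere_mul_fun_norm f φ r)).2 hf.const_fun_smul

theorem circleAverage_mul_fun_norm (f : ℂ → ℝ) (φ : ℝ → ℝ) (r : ℝ) :
    circleAverage (fun z ↦ f z * φ ‖z‖) 0 r = circleAverage f 0 r * φ |r| := by
  rw [circleAverage_congr_sphere (eqOn_sphere_mul_fun_norm f φ r), circleAverage_fun_smul,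
    smul_eq_mul, mul_comm]

end CircleAverage

section SphericalMass

/-- The density of the spherical area with respect to `2 * π * dr` in polar coordinates. -/
noncomputable def radialWeight (r : ℝ) : ℝ :=
  r / (1 + r ^ 2) ^ 2

theorem radialWeight_nonneg {r : ℝ} (hr : 0 ≤ r) : 0 ≤ radialWeight r := by
  unfold radialWeight; positivity

theorem continuous_radialWeight : Continuous radialWeight := by
  unfold radialWeight
  fun_prop (disch := intro; positivity)

theorem hasDerivAt_one_add_sq (r : ℝ) : HasDerivAt (fun r : ℝ ↦ 1 + r ^ 2) (2 * r) r := by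
  simpa using (hasDerivAt_pow 2 r).const_add 1

theorem hasDerivAt_neg_inv_two_mul_one_add_sq (r : ℝ) :
    HasDerivAt (fun r : ℝ ↦ -(2 * (1 + r ^ 2))⁻¹) (radialWeight r) r := by
  refine (((hasDerivAt_one_add_sq r).const_mul 2).fun_inv (by positivity)).fun_neg.congr_deriv ?_
  rw [radialWeight]
  field_simp

theorem tendsto_inv_two_mul_one_add_sq :
    Tendsto (fun r : ℝ ↦ (2 * (1 + r ^ 2))⁻¹) atTop (𝓝 0) :=
  ((tendsto_const_nhds.add_atTop (tendsto_pow_atTop two_ne_zero)).const_mul_atTop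
    two_pos).inv_tendsto_atTop

theorem integral_Ioi_radialWeight : ∫ r in Ioi 0, radialWeight r = 1 / 2 := by
  rw [integral_Ioi_of_hasDerivAt_of_nonneg' (fun r _ ↦ hasDerivAt_neg_inv_two_mul_one_add_sq r)
    (fun r hr ↦ radialWeight_nonneg (le_of_lt hr)) tendsto_inv_two_mul_one_add_sq.neg]
  norm_num

theorem integral_one_div_one_add_norm_sq_sq :
    ∫ z : ℂ, 1 / (1 + ‖z‖ ^ 2) ^ 2 = π := by
  have hradial : ∫ r in Ioi (0 : ℝ), r / (1 + r ^ 2) ^ 2 = 1 / 2 := integral_Ioi_radialWeight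
  rw [integral_fun_norm_addHaar volume fun r : ℝ ↦ 1 / (1 + r ^ 2) ^ 2]
  simp only [Complex.finrank_real_complex, Nat.add_one_sub_one, pow_one, smul_eq_mul, mul_one_div,
    hradial]
  simp [measureReal_def, mul_div_cancel₀]

theorem integrable_one_div_one_add_norm_sq_sq :
    Integrable fun z : ℂ ↦ 1 / (1 + ‖z‖ ^ 2) ^ 2 :=
  .of_integral_ne_zero (by rw [integral_one_div_one_add_norm_sq_sq]; exact pi_ne_zero)

end SphericalMass

section ChordalDistance

/-- The chordal distance of two points of `ℂ`, that is, of their stereographic projections to the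
sphere, scaled so that antipodal points have distance `1`. -/
noncomputable def chordalDist (z w : ℂ) : ℝ :=
  ‖z - w‖ / √((1 + ‖z‖ ^ 2) * (1 + ‖w‖ ^ 2))

theorem Usph_eq_half_add_log_chordalDist (z w : ℂ) : Usph z w = 1 / 2 + log (chordalDist z w) := by
  have hsq : ‖z - w‖ ^ 2 / ((1 + ‖z‖ ^ 2) * (1 + ‖w‖ ^ 2)) = chordalDist z w ^ 2 := by
    rw [chordalDist, div_pow, sq_sqrt (by positivity)]
  rw [Usph, hsq, log_pow]
  push_cast
  ring

theorem chordalDist_nonneg (z w : ℂ) : 0 ≤ chordalDist z w := by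
  unfold chordalDist; positivity

theorem chordalDist_le_one (z w : ℂ) : chordalDist z w ≤ 1 := by
  refine div_le_one_of_le₀ (le_sqrt_of_sq_le ?_) (sqrt_nonneg _)
  calc ‖z - w‖ ^ 2 ≤ (‖z‖ + ‖w‖) ^ 2 := by gcongr; exact norm_sub_le z w
    _ ≤ (1 + ‖z‖ ^ 2) * (1 + ‖w‖ ^ 2) := by linarith [sq_nonneg (1 - ‖z‖ * ‖w‖)]

theorem log_chordalDist_nonpos (z w : ℂ) : log (chordalDist z w) ≤ 0 :=
  log_nonpos (chordalDist_nonneg z w) (chordalDist_le_one z w)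

theorem neg_log_chordalDist {z w : ℂ} (h : z ≠ w) :
    -log (chordalDist z w) =
      log (1 + ‖z‖ ^ 2) / 2 + log (1 + ‖w‖ ^ 2) / 2 - log ‖z - w‖ := by
  have hne : ‖z - w‖ ≠ 0 := norm_ne_zero_iff.2 (sub_ne_zero.2 h)
  rw [chordalDist, log_div hne (by positivity), log_sqrt (by positivity),
    log_mul (by positivity) (by positivity)]
  ring

@[fun_prop]
theorem measurable_log_chordalDist (w : ℂ) : Measurable fun z ↦ log (chordalDist z w) := by
  unfold chordalDist; fun_prop

end ChordalDistance

section RadialPotential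

variable {a r : ℝ}

/-- The average of `-log (chordalDist · w)` over the circle of radius `r` around `0`, as a function
of `a = ‖w‖` and `r`. -/
noncomputable def radialPotential (a r : ℝ) : ℝ :=
  log (1 + r ^ 2) / 2 + log (1 + a ^ 2) / 2 - log (max a r)

theorem radialPotential_nonneg (hr : 0 < r) : 0 ≤ radialPotential a r := by
  have hmax : max a r ^ 2 ≤ (1 + r ^ 2) * (1 + a ^ 2) := by
    rcases max_choice a r with h | h <;> rw [h] <;> nlinarith [sq_nonneg (a * r)]
  have hlog := log_le_log (by positivity) hmax
  rw [log_pow, log_mul (by positivity) (by positivity)] at hlog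
  push_cast at hlog
  unfold radialPotential
  linarith

theorem circleAverage_log_norm_sub_const_eq_log_max (w : ℂ) (hr : 0 < r) :
    circleAverage (fun z ↦ log ‖z - w‖) 0 r = log (max ‖w‖ r) := by
  rw [circleAverage_log_norm_sub_const_eq_log_radius_add_posLog hr.ne', zero_sub, norm_neg,
    posLog_eq_log_max_one (by positivity), ← log_mul hr.ne' (by positivity),
    mul_max_of_nonneg _ _ hr.le, mul_one, mul_inv_cancel_left₀ hr.ne', max_comm]

theorem eqOn_sphere_neg_log_chordalDist {w : ℂ} (hne : r ≠ ‖w‖) :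
    EqOn (fun z ↦ -log (chordalDist z w))
      (fun z ↦ log (1 + r ^ 2) / 2 + log (1 + ‖w‖ ^ 2) / 2 - log ‖z - w‖)
      (Metric.sphere 0 r) := by
  intro z hz
  have hz : ‖z‖ = r := mem_sphere_zero_iff_norm.1 hz
  have hzw : z ≠ w := by rintro rfl; exact hne hz.symm
  simp only [neg_log_chordalDist hzw, hz]

theorem circleIntegrable_neg_log_chordalDist {w : ℂ} (hr : 0 < r) (hne : r ≠ ‖w‖) :
    CircleIntegrable (fun z ↦ -log (chordalDist z w)) 0 r := by
  rw [circleIntegrable_congr (by simpa only [abs_of_pos hr] using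
    eqOn_sphere_neg_log_chordalDist hne)]
  exact (circleIntegrable_const _ 0 r).sub (circleIntegrable_log_norm_sub_const r)

theorem circleAverage_neg_log_chordalDist {w : ℂ} (hr : 0 < r) (hne : r ≠ ‖w‖) :
    circleAverage (fun z ↦ -log (chordalDist z w)) 0 r = radialPotential ‖w‖ r := by
  rw [circleAverage_congr_sphere (by simpa only [abs_of_pos hr] using
      eqOn_sphere_neg_log_chordalDist hne),
    circleAverage_fun_sub (circleIntegrable_const _ 0 r) (circleIntegrable_log_norm_sub_const r),
    circleAverage_const, circleAverage_log_norm_sub_const_eq_log_max w hr, radialPotential]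

theorem eqOn_radialPotential_Iic : EqOn (radialPotential a)
    (fun r ↦ log (1 + r ^ 2) / 2 + (log (1 + a ^ 2) / 2 - log a)) (Iic a) := fun r hr ↦ by
  simp only [radialPotential, max_eq_left (mem_Iic.1 hr)]
  ring

theorem eqOn_radialPotential_Ici : EqOn (radialPotential a)
    (fun r ↦ log (1 + r ^ 2) / 2 + log (1 + a ^ 2) / 2 - log r) (Ici a) := fun r hr ↦ by
  simp only [radialPotential, max_eq_right (mem_Ici.1 hr)]

end RadialPotential

section RadialIntegral

variable {a : ℝ}

/-- An antiderivative of `radialWeight r * (log (1 + r ^ 2) / 2 + k)`, the weighted radial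
potential inside the circle through `w` for a suitable constant `k`. -/
noncomputable def innerPrimitive (k r : ℝ) : ℝ :=
  -(2 * (1 + r ^ 2))⁻¹ * (log (1 + r ^ 2) / 2 + k + 1 / 2)

-- Integration by parts: the derivative of `log (1 + r ^ 2) / 2` times the antiderivative
-- `-(2 * (1 + r ^ 2))⁻¹` of the weight is `-1 / 2` times the weight.
theorem hasDerivAt_innerPrimitive (k r : ℝ) :
    HasDerivAt (innerPrimitive k) (radialWeight r * (log (1 + r ^ 2) / 2 + k)) r := by
  have hlog := (((hasDerivAt_one_add_sq r).log (by positivity)).div_const 2).add_const k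
  refine ((hasDerivAt_neg_inv_two_mul_one_add_sq r).mul (hlog.add_const (1 / 2))).congr_deriv ?_
  rw [radialWeight]
  field_simp
  ring

/-- An antiderivative of `radialWeight r * (log (1 + r ^ 2) / 2 + k - log r)`, the weighted
radial potential outside the circle through `w` for a suitable constant `k`. The antiderivative
`1 / 2 - (2 * (1 + r ^ 2))⁻¹` of the weight is normalised to vanish at `0`, where it compensates
the singularity of `log r`. -/
noncomputable def outerPrimitive (k r : ℝ) : ℝ :=
  (1 / 2 - (2 * (1 + r ^ 2))⁻¹) * (log (1 + r ^ 2) / 2 + k - log r + 1 / 2)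

theorem hasDerivAt_outerPrimitive (k : ℝ) {r : ℝ} (hr : 0 < r) :
    HasDerivAt (outerPrimitive k)
      (radialWeight r * (log (1 + r ^ 2) / 2 + k - log r)) r := by
  have hlog := ((((hasDerivAt_one_add_sq r).log (by positivity)).div_const 2).add_const k).fun_sub
    (hasDerivAt_log hr.ne')
  have hweight := (hasDerivAt_neg_inv_two_mul_one_add_sq r).const_add (1 / 2)
  refine (hweight.mul (hlog.add_const (1 / 2))).congr_deriv ?_
  rw [radialWeight]
  field_simp
  ring

theorem continuous_outerPrimitive (k : ℝ) : Continuous (outerPrimitive k) := by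
  have heq : outerPrimitive k = fun r ↦
      (1 / 2 - (2 * (1 + r ^ 2))⁻¹) * (log (1 + r ^ 2) / 2 + k + 1 / 2) -
        r * (r * log r) * (2 * (1 + r ^ 2))⁻¹ := by
    funext r
    have : 1 + r ^ 2 ≠ 0 := by positivity
    rw [outerPrimitive]
    field_simp
    ring
  have := continuous_mul_log
  rw [heq]
  fun_prop (disch := intro; positivity)

theorem tendsto_log_one_add_sq_sub_log :
    Tendsto (fun r : ℝ ↦ log (1 + r ^ 2) / 2 - log r) atTop (𝓝 0) := by
  have h := (tendsto_log_comp_add_sub_log 1).comp (tendsto_pow_atTop (α := ℝ) two_ne_zero)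
  rw [← zero_div 2]
  refine (h.div_const 2).congr fun r ↦ ?_
  simp only [Function.comp_apply, log_pow, add_comm (r ^ 2)]
  push_cast
  ring

theorem tendsto_outerPrimitive (k : ℝ) :
    Tendsto (outerPrimitive k) atTop (𝓝 ((k + 1 / 2) / 2)) := by
  have h := (tendsto_inv_two_mul_one_add_sq.const_sub (1 / 2)).mul
    (tendsto_log_one_add_sq_sub_log.add_const (k + 1 / 2))
  rw [sub_zero, zero_add, one_div_mul_eq_div] at h
  exact h.congr fun r ↦ by rw [outerPrimitive]; ring

theorem eqOn_weight_mul_potential_Ioc :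
    EqOn (fun r ↦ radialWeight r * radialPotential a r)
      (fun r ↦ radialWeight r * (log (1 + r ^ 2) / 2 + (log (1 + a ^ 2) / 2 - log a)))
      (Ioc 0 a) := fun r hr ↦ by
  simp only [eqOn_radialPotential_Iic hr.2]

theorem intervalIntegrable_radialWeight_mul_log (k a b : ℝ) :
    IntervalIntegrable (fun r ↦ radialWeight r * (log (1 + r ^ 2) / 2 + k)) volume a b := by
  refine (continuous_radialWeight.mul ?_).intervalIntegrable a b
  fun_prop (disch := intro; positivity)

theorem integrableOn_Ioc_weight_mul_potential (ha : 0 ≤ a) :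
    IntegrableOn (fun r ↦ radialWeight r * radialPotential a r) (Ioc 0 a) := by
  rw [integrableOn_congr_fun eqOn_weight_mul_potential_Ioc measurableSet_Ioc,
    ← intervalIntegrable_iff_integrableOn_Ioc_of_le ha]
  exact intervalIntegrable_radialWeight_mul_log _ 0 a

theorem integral_Ioc_weight_mul_potential (ha : 0 ≤ a) :
    ∫ r in Ioc 0 a, radialWeight r * radialPotential a r =
      innerPrimitive (log (1 + a ^ 2) / 2 - log a) a -
        innerPrimitive (log (1 + a ^ 2) / 2 - log a) 0 := by
  rw [setIntegral_congr_fun measurableSet_Ioc eqOn_weight_mul_potential_Ioc,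
    ← intervalIntegral.integral_of_le ha,
    intervalIntegral.integral_eq_sub_of_hasDerivAt (fun r _ ↦ hasDerivAt_innerPrimitive _ r)
      (intervalIntegrable_radialWeight_mul_log _ 0 a)]

theorem weight_mul_potential_nonneg {r : ℝ} (hr : 0 < r) :
    0 ≤ radialWeight r * radialPotential a r :=
  mul_nonneg (radialWeight_nonneg hr.le) (radialPotential_nonneg hr)

theorem hasDerivAt_outerPrimitive_of_lt (ha : 0 ≤ a) {r : ℝ} (hr : a < r) :
    HasDerivAt (outerPrimitive (log (1 + a ^ 2) / 2))
      (radialWeight r * radialPotential a r) r := by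
  rw [eqOn_radialPotential_Ici hr.le]
  exact hasDerivAt_outerPrimitive _ (ha.trans_lt hr)

theorem integrableOn_Ioi_weight_mul_potential (ha : 0 ≤ a) :
    IntegrableOn (fun r ↦ radialWeight r * radialPotential a r) (Ioi a) :=
  integrableOn_Ioi_deriv_of_nonneg (continuous_outerPrimitive _).continuousWithinAt
    (fun _ hr ↦ hasDerivAt_outerPrimitive_of_lt ha hr)
    (fun _ hr ↦ weight_mul_potential_nonneg (ha.trans_lt hr)) (tendsto_outerPrimitive _)

theorem integral_Ioi_weight_mul_potential (ha : 0 ≤ a) :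
    ∫ r in Ioi a, radialWeight r * radialPotential a r =
      (log (1 + a ^ 2) / 2 + 1 / 2) / 2 - outerPrimitive (log (1 + a ^ 2) / 2) a :=
  integral_Ioi_of_hasDerivAt_of_nonneg (continuous_outerPrimitive _).continuousWithinAt
    (fun _ hr ↦ hasDerivAt_outerPrimitive_of_lt ha hr)
    (fun _ hr ↦ weight_mul_potential_nonneg (ha.trans_lt hr)) (tendsto_outerPrimitive _)

theorem integrableOn_Ioi_zero_weight_mul_potential (ha : 0 ≤ a) :
    IntegrableOn (fun r ↦ radialWeight r * radialPotential a r) (Ioi 0) := by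
  rw [← Ioc_union_Ioi_eq_Ioi ha]
  exact (integrableOn_Ioc_weight_mul_potential ha).union (integrableOn_Ioi_weight_mul_potential ha)

theorem integral_Ioi_zero_weight_mul_potential (ha : 0 ≤ a) :
    ∫ r in Ioi 0, radialWeight r * radialPotential a r = 1 / 4 := by
  rw [← Ioc_union_Ioi_eq_Ioi ha, setIntegral_union Ioc_disjoint_Ioi_same measurableSet_Ioi
      (integrableOn_Ioc_weight_mul_potential ha) (integrableOn_Ioi_weight_mul_potential ha),
    integral_Ioc_weight_mul_potential ha, integral_Ioi_weight_mul_potential ha]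
  simp only [innerPrimitive, outerPrimitive, zero_pow two_ne_zero, add_zero, log_one]
  field_simp
  ring

end RadialIntegral

section SphericalMean

variable (w : ℂ)

theorem ae_circleIntegrable_neg_log_chordalDist_mul :
    ∀ᵐ r ∂volume.restrict (Ioi 0),
      CircleIntegrable (fun z ↦ -log (chordalDist z w) * (1 / (1 + ‖z‖ ^ 2) ^ 2)) 0 r := by
  filter_upwards [ae_restrict_mem measurableSet_Ioi,
    ae_restrict_of_ae (Measure.ae_ne volume ‖w‖)] with r hr hne
  exact circleIntegrable_mul_fun_norm (circleIntegrable_neg_log_chordalDist hr hne)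
    fun t ↦ 1 / (1 + t ^ 2) ^ 2

theorem circleAverage_neg_log_chordalDist_mul_ae_eq :
    (fun r ↦ 2 * π * r *
        circleAverage (fun z ↦ -log (chordalDist z w) * (1 / (1 + ‖z‖ ^ 2) ^ 2)) 0 r)
      =ᵐ[volume.restrict (Ioi 0)]
        fun r ↦ 2 * π * (radialWeight r * radialPotential ‖w‖ r) := by
  filter_upwards [ae_restrict_mem measurableSet_Ioi,
    ae_restrict_of_ae (Measure.ae_ne volume ‖w‖)] with r hr hne
  rw [circleAverage_mul_fun_norm _ (fun t ↦ 1 / (1 + t ^ 2) ^ 2),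
    circleAverage_neg_log_chordalDist hr hne, abs_of_pos hr, radialWeight]
  ring

theorem measurable_neg_log_chordalDist_mul :
    Measurable fun z ↦ -log (chordalDist z w) * (1 / (1 + ‖z‖ ^ 2) ^ 2) := by
  fun_prop

theorem neg_log_chordalDist_mul_nonneg :
    0 ≤ fun z ↦ -log (chordalDist z w) * (1 / (1 + ‖z‖ ^ 2) ^ 2) := fun z ↦
  mul_nonneg (neg_nonneg.2 (log_chordalDist_nonpos z w)) (by positivity)

theorem integrableOn_circleAverage_neg_log_chordalDist_mul :
    IntegrableOn (fun r ↦ 2 * π * r *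
      circleAverage (fun z ↦ -log (chordalDist z w) * (1 / (1 + ‖z‖ ^ 2) ^ 2)) 0 r) (Ioi 0) :=
  ((integrableOn_Ioi_zero_weight_mul_potential (norm_nonneg w)).const_mul (2 * π)).congr
    (circleAverage_neg_log_chordalDist_mul_ae_eq w).symm

theorem integrable_neg_log_chordalDist_mul :
    Integrable fun z ↦ -log (chordalDist z w) * (1 / (1 + ‖z‖ ^ 2) ^ 2) :=
  integrable_of_integrableOn_circleAverage (measurable_neg_log_chordalDist_mul w)
    (neg_log_chordalDist_mul_nonneg w) (ae_circleIntegrable_neg_log_chordalDist_mul w)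
    (integrableOn_circleAverage_neg_log_chordalDist_mul w)

theorem integral_neg_log_chordalDist_mul :
    ∫ z, -log (chordalDist z w) * (1 / (1 + ‖z‖ ^ 2) ^ 2) = π / 2 := by
  rw [integral_eq_integral_circleAverage (measurable_neg_log_chordalDist_mul w)
      (neg_log_chordalDist_mul_nonneg w) (ae_circleIntegrable_neg_log_chordalDist_mul w)
      (integrableOn_circleAverage_neg_log_chordalDist_mul w),
    integral_congr_ae (circleAverage_neg_log_chordalDist_mul_ae_eq w), integral_const_mul,
    integral_Ioi_zero_weight_mul_potential (norm_nonneg w)]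
  ring

end SphericalMean

/-- `U_S(·, w)` has vanishing spherical mean. -/
theorem Usph_mean_zero (w : ℂ) :
    ∫ z : ℂ, Usph z w * (1 / (1 + ‖z‖ ^ 2) ^ 2) = 0 := by
  have hsplit (z : ℂ) : Usph z w * (1 / (1 + ‖z‖ ^ 2) ^ 2) =
      1 / 2 * (1 / (1 + ‖z‖ ^ 2) ^ 2) - -log (chordalDist z w) * (1 / (1 + ‖z‖ ^ 2) ^ 2) := by
    rw [Usph_eq_half_add_log_chordalDist]
    ring
  simp only [hsplit]
  rw [integral_sub (integrable_one_div_one_add_norm_sq_sq.const_mul _)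
      (integrable_neg_log_chordalDist_mul w),
    integral_const_mul, integral_one_div_one_add_norm_sq_sq, integral_neg_log_chordalDist_mul w]
  ring
end

section
/- For every real α > −2 and every w ∈ ℂ, one has the identity (1/π) ∫_ℂ exp(α U_S(z,w)) dA_S(z) = 2e^{α/2}/(2+α); in particular the value of this integral is independent of w. -/
open MeasureTheory

/-!
`U_S(z, w)` depends only on the squared chordal distance of `z` and `w`. Rotations of the Riemann
sphere preserve both this distance and the spherical area, so one may move `w` to `0`. In polar
coordinates the substitution `t = r² / (1 + r²)` then shows that the squared chordal distance to a
fixed point is uniformly distributed on `[0, 1]` (Archimedes' hat-box theorem), and the integral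
becomes that of `exp (α / 2) * t ^ (α / 2)` over `[0, 1]`.
-/

open ComplexConjugate Set

/-- The density `(1 + |z|²)⁻²` of the spherical area measure `dA_S` with respect to planar Lebesgue
measure; the total mass is `π`. -/
noncomputable def sphericalDensity (z : ℂ) : ℝ :=
  1 / (1 + ‖z‖ ^ 2) ^ 2

/-- The squared chordal distance of two points of the Riemann sphere in the affine coordinate,
for the sphere of diameter `1`. -/
noncomputable def chordalDistSq (z w : ℂ) : ℝ :=
  ‖z - w‖ ^ 2 / ((1 + ‖z‖ ^ 2) * (1 + ‖w‖ ^ 2))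

/-- The denominator of `sphereRotation a b`; it vanishes at the point sent to `∞`. -/
noncomputable def rotationDenom (a b z : ℂ) : ℂ :=
  conj a - conj b * z

/-- The rotation of the Riemann sphere with matrix `!![a, b; -conj b, conj a]`, in the affine
coordinate. The matrix need not be normalised to determinant `1`, and the point that should go to
`∞` is sent to `0`. -/
noncomputable def sphereRotation (a b z : ℂ) : ℂ :=
  (a * z + b) / rotationDenom a b z

variable {E : Type*} [NormedAddCommGroup E] [NormedSpace ℝ E] {a b z w : ℂ}

theorem integral_image_eq_integral_norm_deriv_sq_smul {s : Set ℂ} {f f' : ℂ → ℂ}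
    (hs : MeasurableSet s) (hf' : ∀ z ∈ s, HasDerivWithinAt f (f' z) s z) (hf : InjOn f s)
    (g : ℂ → E) : ∫ z in f '' s, g z = ∫ z in s, ‖f' z‖ ^ 2 • g (f z) := by
  have det_eq (c : ℂ) :
      ((ContinuousLinearMap.toSpanSingleton ℂ c).restrictScalars ℝ).det = ‖c‖ ^ 2 := by
    simp [ContinuousLinearMap.det, LinearMap.det_restrictScalars, Algebra.norm_complex_eq,
      Complex.normSq_eq_norm_sq]
  simpa only [det_eq, abs_sq] using integral_image_eq_integral_abs_det_fderiv_smul volume hs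
    (fun z hz => (hf' z hz).hasFDerivWithinAt.restrictScalars ℝ) hf g

theorem norm_sq_add_norm_rotationDenom_sq (a b z : ℂ) :
    ‖a * z + b‖ ^ 2 + ‖rotationDenom a b z‖ ^ 2 = (‖a‖ ^ 2 + ‖b‖ ^ 2) * (1 + ‖z‖ ^ 2) := by
  simp only [rotationDenom, ← Complex.normSq_eq_norm_sq, Complex.normSq_apply, Complex.add_re,
    Complex.add_im, Complex.sub_re, Complex.sub_im, Complex.mul_re, Complex.mul_im,
    Complex.conj_re, Complex.conj_im]
  ring

theorem one_add_norm_sphereRotation_sq (hz : rotationDenom a b z ≠ 0) :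
    1 + ‖sphereRotation a b z‖ ^ 2 =
      (‖a‖ ^ 2 + ‖b‖ ^ 2) * (1 + ‖z‖ ^ 2) / ‖rotationDenom a b z‖ ^ 2 := by
  have hD : ‖rotationDenom a b z‖ ≠ 0 := norm_ne_zero_iff.mpr hz
  rw [← norm_sq_add_norm_rotationDenom_sq, sphereRotation, norm_div]
  field_simp
  ring

theorem sphereRotation_sub_sphereRotation (hz : rotationDenom a b z ≠ 0)
    (hw : rotationDenom a b w ≠ 0) :
    sphereRotation a b z - sphereRotation a b w =
      ((‖a‖ ^ 2 + ‖b‖ ^ 2 : ℝ) : ℂ) * (z - w) / (rotationDenom a b z * rotationDenom a b w) := by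
  rw [sphereRotation, sphereRotation, div_sub_div _ _ hz hw]
  congr 1
  push_cast
  rw [← Complex.mul_conj', ← Complex.mul_conj', rotationDenom, rotationDenom]
  ring

theorem chordalDistSq_sphereRotation (hab : ‖a‖ ^ 2 + ‖b‖ ^ 2 ≠ 0) (hz : rotationDenom a b z ≠ 0)
    (hw : rotationDenom a b w ≠ 0) :
    chordalDistSq (sphereRotation a b z) (sphereRotation a b w) = chordalDistSq z w := by
  have hDz : ‖rotationDenom a b z‖ ≠ 0 := norm_ne_zero_iff.mpr hz
  have hDw : ‖rotationDenom a b w‖ ≠ 0 := norm_ne_zero_iff.mpr hw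
  rw [chordalDistSq, chordalDistSq, one_add_norm_sphereRotation_sq hz,
    one_add_norm_sphereRotation_sq hw, sphereRotation_sub_sphereRotation hz hw, norm_div, norm_mul,
    norm_mul, Complex.norm_real, div_pow, mul_pow, mul_pow, Real.norm_eq_abs, sq_abs]
  field_simp

theorem rotationDenom_sphereRotation (hz : rotationDenom a b z ≠ 0) :
    rotationDenom (conj a) (-b) (sphereRotation a b z) =
      ((‖a‖ ^ 2 + ‖b‖ ^ 2 : ℝ) : ℂ) / rotationDenom a b z := by
  rw [eq_div_iff hz, rotationDenom, sphereRotation, sub_mul, mul_assoc, div_mul_cancel₀ _ hz]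
  push_cast
  rw [← Complex.mul_conj', ← Complex.mul_conj', rotationDenom, Complex.conj_conj, map_neg]
  ring

theorem mapsTo_sphereRotation (hab : ‖a‖ ^ 2 + ‖b‖ ^ 2 ≠ 0) :
    MapsTo (sphereRotation a b) {z | rotationDenom a b z ≠ 0}
      {z | rotationDenom (conj a) (-b) z ≠ 0} := by
  intro z (hz : rotationDenom a b z ≠ 0)
  rw [mem_ofPred_eq, rotationDenom_sphereRotation hz]
  exact div_ne_zero (mod_cast hab) hz

theorem leftInvOn_sphereRotation (hab : ‖a‖ ^ 2 + ‖b‖ ^ 2 ≠ 0) :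
    LeftInvOn (sphereRotation (conj a) (-b)) (sphereRotation a b)
      {z | rotationDenom a b z ≠ 0} := by
  intro z (hz : rotationDenom a b z ≠ 0)
  have hN : ((‖a‖ ^ 2 + ‖b‖ ^ 2 : ℝ) : ℂ) ≠ 0 := mod_cast hab
  rw [sphereRotation, rotationDenom_sphereRotation hz, div_eq_iff (div_ne_zero hN hz),
    mul_div_assoc', eq_div_iff hz, sphereRotation, add_mul, mul_assoc, div_mul_cancel₀ _ hz]
  push_cast
  rw [← Complex.mul_conj', ← Complex.mul_conj', rotationDenom]
  ring

theorem bijOn_sphereRotation (hab : ‖a‖ ^ 2 + ‖b‖ ^ 2 ≠ 0) :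
    BijOn (sphereRotation a b) {z | rotationDenom a b z ≠ 0}
      {z | rotationDenom (conj a) (-b) z ≠ 0} := by
  have hab' : ‖conj a‖ ^ 2 + ‖-b‖ ^ 2 ≠ 0 := by rwa [Complex.norm_conj, norm_neg]
  have hinv : InvOn (sphereRotation (conj a) (-b)) (sphereRotation a b)
      {z | rotationDenom a b z ≠ 0} {z | rotationDenom (conj a) (-b) z ≠ 0} :=
    ⟨leftInvOn_sphereRotation hab, by simpa using leftInvOn_sphereRotation hab'⟩
  exact hinv.bijOn (mapsTo_sphereRotation hab) (by simpa using mapsTo_sphereRotation hab')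

theorem hasDerivAt_sphereRotation (hz : rotationDenom a b z ≠ 0) :
    HasDerivAt (sphereRotation a b)
      (((‖a‖ ^ 2 + ‖b‖ ^ 2 : ℝ) : ℂ) / rotationDenom a b z ^ 2) z := by
  have hnum : HasDerivAt (fun z => a * z + b) a z := by
    simpa using ((hasDerivAt_id z).const_mul a).add_const b
  have hdenom : HasDerivAt (rotationDenom a b) (-conj b) z := by
    unfold rotationDenom
    simpa using ((hasDerivAt_id z).const_mul (conj b)).const_sub (conj a)
  refine (hnum.div hdenom hz).congr_deriv ?_
  congr 1
  push_cast
  rw [← Complex.mul_conj', ← Complex.mul_conj', rotationDenom]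
  ring

theorem norm_sq_mul_sphericalDensity_sphereRotation (hab : ‖a‖ ^ 2 + ‖b‖ ^ 2 ≠ 0)
    (hz : rotationDenom a b z ≠ 0) :
    ‖((‖a‖ ^ 2 + ‖b‖ ^ 2 : ℝ) : ℂ) / rotationDenom a b z ^ 2‖ ^ 2 *
      sphericalDensity (sphereRotation a b z) = sphericalDensity z := by
  have hD : ‖rotationDenom a b z‖ ≠ 0 := norm_ne_zero_iff.mpr hz
  rw [sphericalDensity, sphericalDensity, one_add_norm_sphereRotation_sq hz, norm_div,
    Complex.norm_real, norm_pow, div_pow, Real.norm_eq_abs, sq_abs]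
  field_simp

theorem ae_rotationDenom_ne_zero (hab : ‖a‖ ^ 2 + ‖b‖ ^ 2 ≠ 0) :
    ∀ᵐ z : ℂ, rotationDenom a b z ≠ 0 := by
  refine ae_iff.mpr (Subsingleton.measure_zero ?_ _)
  intro z hz w hw
  simp only [rotationDenom, not_not, mem_ofPred_eq, sub_eq_zero] at hz hw
  have hb : conj b ≠ 0 := by
    intro hb
    simp_all
  exact mul_left_cancel₀ hb (hz.symm.trans hw)

theorem volume_restrict_rotationDenom_ne_zero (hab : ‖a‖ ^ 2 + ‖b‖ ^ 2 ≠ 0) :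
    (volume : Measure ℂ).restrict {z | rotationDenom a b z ≠ 0} = volume :=
  Measure.restrict_eq_self_of_ae_mem (ae_rotationDenom_ne_zero hab)

theorem integral_sphericalDensity_smul_comp_sphereRotation (hab : ‖a‖ ^ 2 + ‖b‖ ^ 2 ≠ 0)
    (F : ℂ → E) :
    ∫ z, sphericalDensity z • F (sphereRotation a b z) = ∫ z, sphericalDensity z • F z := by
  have hab' : ‖conj a‖ ^ 2 + ‖-b‖ ^ 2 ≠ 0 := by rwa [Complex.norm_conj, norm_neg]
  have hopen : IsOpen {z | rotationDenom a b z ≠ 0} :=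
    isOpen_ne_fun (by unfold rotationDenom; fun_prop) continuous_const
  symm
  calc ∫ z, sphericalDensity z • F z
      = ∫ z in sphereRotation a b '' {z | rotationDenom a b z ≠ 0}, sphericalDensity z • F z := by
        rw [(bijOn_sphereRotation hab).image_eq, volume_restrict_rotationDenom_ne_zero hab']
    _ = ∫ z in {z | rotationDenom a b z ≠ 0},
          ‖((‖a‖ ^ 2 + ‖b‖ ^ 2 : ℝ) : ℂ) / rotationDenom a b z ^ 2‖ ^ 2 •
            sphericalDensity (sphereRotation a b z) • F (sphereRotation a b z) :=
        integral_image_eq_integral_norm_deriv_sq_smul hopen.measurableSet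
          (fun _ hz => (hasDerivAt_sphereRotation hz).hasDerivWithinAt)
          (bijOn_sphereRotation hab).injOn _
    _ = ∫ z in {z | rotationDenom a b z ≠ 0},
          sphericalDensity z • F (sphereRotation a b z) := by
        refine setIntegral_congr_fun hopen.measurableSet fun z hz => ?_
        simp only [smul_smul, norm_sq_mul_sphericalDensity_sphereRotation hab hz]
    _ = ∫ z, sphericalDensity z • F (sphereRotation a b z) := by
        rw [volume_restrict_rotationDenom_ne_zero hab]

theorem integral_sphericalDensity_smul_comp_chordalDistSq_eq_origin (w : ℂ) (F : ℝ → E) :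
    ∫ z, sphericalDensity z • F (chordalDistSq z w) =
      ∫ z, sphericalDensity z • F (chordalDistSq z 0) := by
  have hdet : ‖(1 : ℂ)‖ ^ 2 + ‖w‖ ^ 2 ≠ 0 := by
    rw [norm_one]
    positivity
  have hzero : rotationDenom 1 w 0 ≠ 0 := by simp [rotationDenom]
  have hrot : sphereRotation 1 w 0 = w := by simp [sphereRotation, rotationDenom]
  rw [← integral_sphericalDensity_smul_comp_sphereRotation hdet]
  refine integral_congr_ae ?_
  filter_upwards [ae_rotationDenom_ne_zero hdet] with z hz
  rw [← chordalDistSq_sphereRotation hdet hz hzero, hrot]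

theorem hasDerivAt_sq_div_one_add_sq (r : ℝ) :
    HasDerivAt (fun r : ℝ => r ^ 2 / (1 + r ^ 2)) (2 * r / (1 + r ^ 2) ^ 2) r := by
  have hsq : HasDerivAt (fun r : ℝ => r ^ 2) (2 * r) r := by simpa using hasDerivAt_pow 2 r
  refine (hsq.div (hsq.const_add 1) (by positivity)).congr_deriv ?_
  congr 1
  ring

theorem bijOn_sq_div_one_add_sq :
    BijOn (fun r : ℝ => r ^ 2 / (1 + r ^ 2)) (Ioi 0) (Ioo 0 1) := by
  refine ⟨fun r (hr : 0 < r) => ⟨by positivity, ?_⟩, fun r (hr : 0 < r) s (hs : 0 < s) hrs => ?_,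
    fun t ⟨ht0, ht1⟩ => ⟨√(t / (1 - t)), ?_, ?_⟩⟩
  · exact (div_lt_one (by positivity)).mpr (lt_one_add _)
  · have hsq : r ^ 2 = s ^ 2 := by
      have := (div_eq_div_iff (by positivity) (by positivity)).mp hrs
      linear_combination this
    exact (sq_eq_sq₀ hr.le hs.le).mp hsq
  · exact Real.sqrt_pos.mpr (div_pos ht0 (sub_pos.mpr ht1))
  · have h1t : 1 - t ≠ 0 := (sub_pos.mpr ht1).ne'
    simp only [Real.sq_sqrt (div_nonneg ht0.le (sub_pos.mpr ht1).le)]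
    field_simp
    ring

theorem integral_Ioi_comp_sq_div_one_add_sq (F : ℝ → E) :
    ∫ r in Ioi (0 : ℝ), (2 * r / (1 + r ^ 2) ^ 2) • F (r ^ 2 / (1 + r ^ 2)) =
      ∫ t in (0 : ℝ)..1, F t := by
  rw [intervalIntegral.integral_of_le zero_le_one, integral_Ioc_eq_integral_Ioo,
    ← bijOn_sq_div_one_add_sq.image_eq,
    integral_image_eq_integral_abs_deriv_smul measurableSet_Ioi
      (fun r _ => (hasDerivAt_sq_div_one_add_sq r).hasDerivWithinAt) bijOn_sq_div_one_add_sq.injOn]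
  refine setIntegral_congr_fun measurableSet_Ioi fun r (hr : 0 < r) => ?_
  simp only [abs_of_pos (show 0 < 2 * r / (1 + r ^ 2) ^ 2 by positivity)]

theorem integral_fun_norm_complex (f : ℝ → E) :
    ∫ z : ℂ, f ‖z‖ = Real.pi • ∫ r in Ioi (0 : ℝ), (2 * r) • f r := by
  have hball : (volume : Measure ℂ).real (Metric.ball 0 1) = Real.pi := by
    simp [Measure.real, Complex.volume_ball]
  simp only [integral_fun_norm_addHaar, Complex.finrank_real_complex, hball, mul_smul,
    integral_smul, Nat.add_one_sub_one, pow_one, ← Nat.cast_smul_eq_nsmul ℝ, Nat.cast_ofNat]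
  exact smul_comm _ _ _

theorem integral_sphericalDensity_smul_comp_chordalDistSq (w : ℂ) (F : ℝ → E) :
    ∫ z, sphericalDensity z • F (chordalDistSq z w) = Real.pi • ∫ t in (0 : ℝ)..1, F t := by
  calc ∫ z, sphericalDensity z • F (chordalDistSq z w)
      = ∫ z : ℂ, (1 / (1 + ‖z‖ ^ 2) ^ 2) • F (‖z‖ ^ 2 / (1 + ‖z‖ ^ 2)) := by
        rw [integral_sphericalDensity_smul_comp_chordalDistSq_eq_origin]
        simp [sphericalDensity, chordalDistSq]
    _ = Real.pi • ∫ r in Ioi (0 : ℝ),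
          (2 * r) • (1 / (1 + r ^ 2) ^ 2) • F (r ^ 2 / (1 + r ^ 2)) :=
        integral_fun_norm_complex fun r => (1 / (1 + r ^ 2) ^ 2) • F (r ^ 2 / (1 + r ^ 2))
    _ = Real.pi • ∫ t in (0 : ℝ)..1, F t := by
        simp only [smul_smul, mul_one_div, integral_Ioi_comp_sq_div_one_add_sq]

theorem integral_exp_mul_half_add_half_log {α : ℝ} (hα : -2 < α) :
    ∫ t in (0 : ℝ)..1, Real.exp (α * (1 / 2 + 1 / 2 * Real.log t)) =
      2 * Real.exp (α / 2) / (2 + α) := by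
  have hexp (t : ℝ) (ht : 0 < t) :
      Real.exp (α * (1 / 2 + 1 / 2 * Real.log t)) = Real.exp (α / 2) * t ^ (α / 2) := by
    rw [Real.rpow_def_of_pos ht, ← Real.exp_add]
    ring_nf
  have hα₀ : α / 2 + 1 ≠ 0 := by linarith
  calc ∫ t in (0 : ℝ)..1, Real.exp (α * (1 / 2 + 1 / 2 * Real.log t))
      = ∫ t in (0 : ℝ)..1, Real.exp (α / 2) * t ^ (α / 2) :=
        intervalIntegral.integral_congr_Ioo_of_le zero_le_one fun t ht => hexp t ht.1
    _ = Real.exp (α / 2) * (1 / (α / 2 + 1)) := by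
        rw [intervalIntegral.integral_const_mul, integral_rpow (Or.inl (by linarith)),
          Real.one_rpow, Real.zero_rpow hα₀, sub_zero]
    _ = 2 * Real.exp (α / 2) / (2 + α) := by
        rw [show α / 2 + 1 = (2 + α) / 2 by ring]
        field_simp

/-- the elementary integral of `exp(α U_S(·, w))` over the sphere. -/
theorem Usph_exp_integral (α : ℝ) (hα : -2 < α) (w : ℂ) :
    1 / Real.pi * ∫ z : ℂ, Real.exp (α * Usph z w) * (1 / (1 + ‖z‖ ^ 2) ^ 2) =
      2 * Real.exp (α / 2) / (2 + α) := by
  have hatBox : ∫ z : ℂ, Real.exp (α * Usph z w) * (1 / (1 + ‖z‖ ^ 2) ^ 2) =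
      Real.pi * ∫ t in (0 : ℝ)..1, Real.exp (α * (1 / 2 + 1 / 2 * Real.log t)) := by
    simpa only [smul_eq_mul, mul_comm, sphericalDensity, chordalDistSq, Usph] using
      integral_sphericalDensity_smul_comp_chordalDistSq w
        fun t => Real.exp (α * (1 / 2 + 1 / 2 * Real.log t))
  rw [hatBox, integral_exp_mul_half_add_half_log hα, one_div,
    inv_mul_cancel_left₀ Real.pi_ne_zero]
end

section
/- Let Λ = ω₁ℤ + ω₂ℤ with ω₁ > 0 real, Im ω₂ > 0, and ω₁·Im ω₂ = π/2. Then the modified Weierstrass sigma function σ_* satisfies, for j = 1, 2 and all z ∈ ℂ, the periodicity-type identity σ_*(z) = −e^{−2ω̄_j z − |ω_j|²} σ_*(z + ω_j); consequently, the function z ↦ e^{−|z|²} |σ_*(z)| is Λ-periodic. -/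
open MeasureTheory

/-- The lattice `Λ = ω₁ℤ + ω₂ℤ` as a subset of `ℂ`. -/
def latticeSet (ω₁ ω₂ : ℂ) : Set ℂ :=
  {w : ℂ | ∃ m n : ℤ, w = (m : ℂ) * ω₁ + (n : ℂ) * ω₂}

/-- The Weierstrass sigma function of the lattice `ω₁ℤ + ω₂ℤ`. -/
noncomputable def wSigma (ω₁ ω₂ : ℂ) (z : ℂ) : ℂ :=
  z * ∏' p : {p : ℤ × ℤ // p ≠ 0},
      (1 - z / ((p.1.1 : ℂ) * ω₁ + (p.1.2 : ℂ) * ω₂)) *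
        Complex.exp (z / ((p.1.1 : ℂ) * ω₁ + (p.1.2 : ℂ) * ω₂) +
          z ^ 2 / (2 * ((p.1.1 : ℂ) * ω₁ + (p.1.2 : ℂ) * ω₂) ^ 2))

/-- The Weierstrass zeta function `ζ = σ'/σ`. -/
noncomputable def wZeta (ω₁ ω₂ : ℂ) (z : ℂ) : ℂ :=
  deriv (wSigma ω₁ ω₂) z / wSigma ω₁ ω₂ z

/-- The quasi-period `λ₁ = 2ζ(ω₁/2)`. -/
noncomputable def lambda1 (ω₁ ω₂ : ℂ) : ℂ := 2 * wZeta ω₁ ω₂ (ω₁ / 2)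

/-- The constant `b = 1 − λ₁/(2ω₁)`. -/
noncomputable def bconst (ω₁ ω₂ : ℂ) : ℂ := 1 - lambda1 ω₁ ω₂ / (2 * ω₁)

/-- The modified Weierstrass sigma function `σ_*(z) = e^{b z²} σ(z)`. -/
noncomputable def sigmaStar (ω₁ ω₂ : ℂ) (z : ℂ) : ℂ :=
  Complex.exp (bconst ω₁ ω₂ * z ^ 2) * wSigma ω₁ ω₂ z

/-- A fundamental domain of the lattice `ω₁ℤ + ω₂ℤ`. -/
def fundDomain (ω₁ ω₂ : ℂ) : Set ℂ :=
  (fun p : ℝ × ℝ => (p.1 : ℂ) * ω₁ + (p.2 : ℂ) * ω₂) ''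
    (Set.Ico (0 : ℝ) 1 ×ˢ Set.Ico (0 : ℝ) 1)

/-- The normalizing constant `A_Λ`. -/
noncomputable def Aconst (ω₁ ω₂ : ℂ) : ℝ :=
  2 / Real.pi * ∫ z in fundDomain ω₁ ω₂, (Real.log ‖sigmaStar ω₁ ω₂ z‖ - ‖z‖ ^ 2)

/-- The unipolar Green function of the torus `ℂ/Λ`. -/
noncomputable def Utorus (ω₁ ω₂ : ℂ) (z w : ℂ) : ℝ :=
  Real.log ‖sigmaStar ω₁ ω₂ (z - w)‖ - ‖z - w‖ ^ 2 - Aconst ω₁ ω₂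

/-- The monic first degree pseudopolynomial on the torus with root `α`. -/
noncomputable def pseudoPoly (ω₁ ω₂ : ℂ) (α z : ℂ) : ℂ :=
  Complex.exp (2 * Complex.I * ((((starRingEnd ℂ) α) * z).im : ℂ)) *
    (Complex.exp (-((‖z - α‖ ^ 2 : ℝ) : ℂ)) * sigmaStar ω₁ ω₂ (z - α))

/-!
The product `σ(z) / z` converges locally uniformly, so the logarithmic derivative `ζ` of `σ` has
derivative `-℘` and changes by a constant `η(l)` under a period `l`; hence
`σ(z + l) = -exp(η(l) (z + l / 2)) σ(z)`. Multiplying `σ` by `exp(b z²)` replaces `η(l)` by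
`2 b l + η(l)`, and the asserted law is the case where this equals `2 conj l`. The constant `b` is
chosen so that this holds for `l = ω₁`. Legendre's relation `η(ω₁) ω₂ - η(ω₂) ω₁ = 2 π i` then
makes it true for `l = ω₂` exactly when the covolume is `π / 2`.

Legendre's relation comes from integrating an odd function with the single pole `1 / z` around a
rectangle. After rescaling to `ω₁ = 1` and subtracting a linear term to make `ζ` exactly
`1`-periodic, the integrals over the vertical edges cancel, while the two horizontal ones differ by
the increment along `ω₂`.
-/

open Complex Filter Topology
open scoped ComplexConjugate Interval

section LogDeriv

variable {U : Set ℂ} {f : ℂ → ℂ} {z : ℂ}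

lemma hasDerivAt_logDeriv (hU : IsOpen U) (hf : DifferentiableOn ℂ f U) (hz : z ∈ U)
    (hfz : f z ≠ 0) :
    HasDerivAt (logDeriv f) (deriv (deriv f) z / f z - (deriv f z / f z) ^ 2) z := by
  have hf₁ := (hf.differentiableAt (hU.mem_nhds hz)).hasDerivAt
  have hf₂ := ((hf.deriv hU).differentiableAt (hU.mem_nhds hz)).hasDerivAt
  convert! hf₂.div hf₁ hfz using 1
  field_simp

lemma tendsto_deriv_logDeriv {ι : Type*} {l : Filter ι} [l.NeBot] {F : ι → ℂ → ℂ} (hU : IsOpen U)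
    (hF : ∀ᶠ n in l, DifferentiableOn ℂ (F n) U) (hFf : TendstoLocallyUniformlyOn F f l U)
    (hz : z ∈ U) (hfz : f z ≠ 0) :
    Tendsto (fun n ↦ deriv (logDeriv (F n)) z) l (𝓝 (deriv (logDeriv f) z)) := by
  have hF₁ := hFf.deriv hF hU
  have hF₂ := hF₁.deriv (hF.mono fun n hn ↦ hn.deriv hU) hU
  have h₀ := hFf.tendsto_at hz
  have h₁ := hF₁.tendsto_at hz
  have h₂ := hF₂.tendsto_at hz
  rw [(hasDerivAt_logDeriv hU (hFf.differentiableOn hF hU) hz hfz).deriv]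
  refine ((h₂.div h₀ hfz).sub ((h₁.div h₀ hfz).pow 2)).congr' ?_
  filter_upwards [hF, h₀.eventually_ne hfz] with n hn hnz
  exact (hasDerivAt_logDeriv hU hn hz hnz).deriv.symm

lemma logDeriv_comp_neg {𝕜 𝕜' : Type*} [NontriviallyNormedField 𝕜] [NontriviallyNormedField 𝕜']
    [NormedAlgebra 𝕜 𝕜'] (f : 𝕜 → 𝕜') (z : 𝕜) :
    logDeriv (fun w ↦ f (-w)) z = -logDeriv f (-z) := by
  rw [logDeriv_apply, logDeriv_apply, deriv_comp_neg, neg_div]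

end LogDeriv

section ElementaryFactor

/-- The Weierstrass elementary factor `E₂(u) = (1 - u) exp(u + u² / 2)` of genus two. -/
noncomputable def elementaryFactor (u : ℂ) : ℂ := (1 - u) * exp (u + u ^ 2 / 2)

@[simp] lemma elementaryFactor_zero : elementaryFactor 0 = 1 := by simp [elementaryFactor]

lemma elementaryFactor_ne_zero {u : ℂ} (hu : u ≠ 1) : elementaryFactor u ≠ 0 :=
  mul_ne_zero (sub_ne_zero.2 hu.symm) (exp_ne_zero _)

lemma hasDerivAt_elementaryFactor (u : ℂ) :
    HasDerivAt elementaryFactor (-u ^ 2 * exp (u + u ^ 2 / 2)) u := by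
  have hexp : HasDerivAt (fun u : ℂ ↦ exp (u + u ^ 2 / 2)) (exp (u + u ^ 2 / 2) * (1 + u)) u := by
    convert! ((hasDerivAt_id u).add ((hasDerivAt_pow 2 u).div_const 2)).cexp using 2
    simp
  convert! ((hasDerivAt_id u).const_sub 1).mul hexp using 1
  simp only [id_eq]
  ring

lemma differentiable_elementaryFactor : Differentiable ℂ elementaryFactor := fun u ↦
  (hasDerivAt_elementaryFactor u).differentiableAt

lemma logDeriv_elementaryFactor {u : ℂ} (hu : u ≠ 1) :
    logDeriv elementaryFactor u = 1 / (u - 1) + 1 + u := by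
  have hu₁ : u - 1 ≠ 0 := sub_ne_zero.2 hu
  have hu₂ : 1 - u ≠ 0 := sub_ne_zero.2 hu.symm
  rw [logDeriv_apply, (hasDerivAt_elementaryFactor u).deriv, elementaryFactor,
    mul_div_mul_right _ _ (exp_ne_zero _)]
  field_simp
  ring

lemma norm_elementaryFactor_sub_one_le (u : ℂ) :
    ‖elementaryFactor u - 1‖ ≤ Real.exp (‖u‖ + ‖u‖ ^ 2 / 2) * ‖u‖ ^ 3 := by
  have hbound : ∀ x ∈ Metric.closedBall (0 : ℂ) ‖u‖,
      ‖-x ^ 2 * exp (x + x ^ 2 / 2)‖ ≤ ‖u‖ ^ 2 * Real.exp (‖u‖ + ‖u‖ ^ 2 / 2) := by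
    intro x hx
    rw [mem_closedBall_zero_iff] at hx
    rw [norm_mul, norm_neg, norm_pow, norm_exp]
    gcongr
    calc (x + x ^ 2 / 2).re ≤ ‖x + x ^ 2 / 2‖ := re_le_norm _
      _ ≤ ‖x‖ + ‖x ^ 2 / 2‖ := norm_add_le _ _
      _ = ‖x‖ + ‖x‖ ^ 2 / 2 := by simp
      _ ≤ ‖u‖ + ‖u‖ ^ 2 / 2 := by gcongr
  have h := (convex_closedBall (0 : ℂ) ‖u‖).norm_image_sub_le_of_norm_hasDerivWithin_le
    (fun x _ ↦ (hasDerivAt_elementaryFactor x).hasDerivWithinAt) hbound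
    (x := 0) (y := u) (by simp) (by simp)
  rw [elementaryFactor_zero, sub_zero] at h
  linarith

end ElementaryFactor

section CanonicalProduct

lemma hasSum_deriv_logDeriv {ι : Type*} {U : Set ℂ} {z : ℂ} {f : ι → ℂ → ℂ} {F : ℂ → ℂ}
    (hU : IsOpen U) (hf : ∀ i, DifferentiableOn ℂ (f i) U) (hfF : HasProdLocallyUniformlyOn f F U)
    (hz : z ∈ U) (hfz : ∀ i, f i z ≠ 0) (hFz : F z ≠ 0) :
    HasSum (fun i ↦ deriv (logDeriv (f i)) z) (deriv (logDeriv F) z) := by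
  have hdiff : ∀ i, ∀ᶠ w in 𝓝 z, DifferentiableAt ℂ (f i) w := fun i ↦
    (hU.eventually_mem hz).mono fun w hw ↦ (hf i).differentiableAt (hU.mem_nhds hw)
  have hlim := tendsto_deriv_logDeriv hU
    (.of_forall fun s ↦ DifferentiableOn.fun_finsetProd fun i _ ↦ hf i)
    (hasProdLocallyUniformlyOn_iff_tendstoLocallyUniformlyOn.1 hfF) hz hFz
  refine hlim.congr fun s ↦ ?_
  have hprod : logDeriv (fun w ↦ ∏ i ∈ s, f i w) =ᶠ[𝓝 z] fun w ↦ ∑ i ∈ s, logDeriv (f i) w := by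
    filter_upwards [(s.eventually_all).2 fun i _ ↦
      ((hdiff i).self_of_nhds.continuousAt.eventually_ne (hfz i)).and (hdiff i)] with w hw
    exact logDeriv_prod (fun i hi ↦ (hw i hi).1) fun i hi ↦ (hw i hi).2
  rw [hprod.deriv_eq, deriv_fun_sum]
  exact fun i _ ↦ (hasDerivAt_logDeriv hU (hf i) hz (hfz i)).differentiableAt

/-- The Weierstrass canonical product of genus two `∏ᵢ E₂(z / aᵢ)`. Its zeros are the nonzero
`aᵢ`: an index with `aᵢ = 0` contributes the factor `1`, because `z / 0 = 0`. -/
noncomputable def canonicalProduct {ι : Type*} (a : ι → ℂ) (z : ℂ) : ℂ :=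
  ∏' i, elementaryFactor (z / a i)

variable {ι : Type*} {a : ι → ℂ} {z : ℂ}

lemma div_ne_one_of_notMem_range (hz : z ∉ Set.range a \ {0}) (i : ι) : z / a i ≠ 1 := by
  intro h
  have hi : a i ≠ 0 := by
    rintro hi
    simp [hi] at h
  rw [div_eq_one_iff_eq hi] at h
  exact hz ⟨⟨i, h.symm⟩, h ▸ hi⟩

lemma differentiable_elementaryFactor_div (c : ℂ) :
    Differentiable ℂ fun z ↦ elementaryFactor (z / c) :=
  differentiable_elementaryFactor.comp (differentiable_id.div_const c)

lemma eventually_norm_elementaryFactor_div_sub_one_le (ha : Summable fun i ↦ (‖a i‖ ^ 3)⁻¹)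
    (R : ℝ) : ∀ᶠ i in cofinite, ∀ z, ‖z‖ ≤ R →
      ‖elementaryFactor (z / a i) - 1‖ ≤ Real.exp 2 * R ^ 3 * (‖a i‖ ^ 3)⁻¹ := by
  have hlim := (ha.mul_left (R ^ 3)).tendsto_cofinite_zero
  filter_upwards [hlim.eventually_lt_const one_pos] with i hi z hz
  have hcube : ‖z / a i‖ ^ 3 ≤ R ^ 3 * (‖a i‖ ^ 3)⁻¹ := by
    rw [norm_div, div_pow, div_eq_mul_inv]
    gcongr
  have hle : ‖z / a i‖ ≤ 1 := (pow_le_one_iff_of_nonneg (norm_nonneg _) (by simp)).1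
    (hcube.trans hi.le)
  calc ‖elementaryFactor (z / a i) - 1‖
      ≤ Real.exp (‖z / a i‖ + ‖z / a i‖ ^ 2 / 2) * ‖z / a i‖ ^ 3 :=
        norm_elementaryFactor_sub_one_le _
    _ ≤ Real.exp 2 * (R ^ 3 * (‖a i‖ ^ 3)⁻¹) := by
        gcongr
        nlinarith [norm_nonneg (z / a i)]
    _ = Real.exp 2 * R ^ 3 * (‖a i‖ ^ 3)⁻¹ := (mul_assoc ..).symm

lemma hasProdLocallyUniformlyOn_canonicalProduct (ha : Summable fun i ↦ (‖a i‖ ^ 3)⁻¹) :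
    HasProdLocallyUniformlyOn (fun i z ↦ elementaryFactor (z / a i)) (canonicalProduct a)
      Set.univ := by
  refine hasProdLocallyUniformlyOn_of_forall_compact isOpen_univ fun K _ hK ↦ ?_
  obtain ⟨R, hR⟩ := hK.isBounded.exists_norm_le
  have hprod := (ha.mul_left (Real.exp 2 * R ^ 3)).hasProdUniformlyOn_one_add
    (f := fun i z ↦ elementaryFactor (z / a i) - 1) hK
    ((eventually_norm_elementaryFactor_div_sub_one_le ha R).mono fun i hi z hz ↦ hi z (hR z hz))
    fun i ↦ ((differentiable_elementaryFactor_div _).continuous.sub continuous_const).continuousOn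
  simpa only [add_sub_cancel] using! hprod

lemma differentiable_canonicalProduct (ha : Summable fun i ↦ (‖a i‖ ^ 3)⁻¹) :
    Differentiable ℂ (canonicalProduct a) := by
  rw [← differentiableOn_univ]
  refine (hasProdLocallyUniformlyOn_iff_tendstoLocallyUniformlyOn.1
    (hasProdLocallyUniformlyOn_canonicalProduct ha)).differentiableOn (.of_forall fun s ↦ ?_)
    isOpen_univ
  exact DifferentiableOn.fun_finsetProd fun i _ ↦
    (differentiable_elementaryFactor_div _).differentiableOn

lemma canonicalProduct_ne_zero (ha : Summable fun i ↦ (‖a i‖ ^ 3)⁻¹)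
    (hz : z ∉ Set.range a \ {0}) : canonicalProduct a z ≠ 0 := by
  have hsum : Summable fun i ↦ ‖elementaryFactor (z / a i) - 1‖ :=
    .of_norm_bounded_eventually (ha.mul_left _) <|
      (eventually_norm_elementaryFactor_div_sub_one_le ha ‖z‖).mono fun i hi ↦ by
        simpa only [norm_norm] using hi z le_rfl
  have hprod := tprod_one_add_ne_zero_of_summable (f := fun i ↦ elementaryFactor (z / a i) - 1)
    (fun i ↦ by
      simpa only [add_sub_cancel] using elementaryFactor_ne_zero (div_ne_one_of_notMem_range hz i))
    hsum
  simpa only [add_sub_cancel] using! hprod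

lemma canonicalProduct_neg (e : ι ≃ ι) (he : ∀ i, a (e i) = -a i) (z : ℂ) :
    canonicalProduct a (-z) = canonicalProduct a z := by
  simp only [canonicalProduct]
  rw [← e.tprod_eq]
  simp [he]

lemma deriv_logDeriv_elementaryFactor_div {c : ℂ} (hc : c ≠ 0) (hz : z ≠ c) :
    deriv (logDeriv fun w ↦ elementaryFactor (w / c)) z = -(1 / (z - c) ^ 2 - 1 / c ^ 2) := by
  have hlog : logDeriv (fun w ↦ elementaryFactor (w / c)) =ᶠ[𝓝 z]
      fun w ↦ (w - c)⁻¹ + 1 / c + w / c ^ 2 := by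
    filter_upwards [isOpen_ne.mem_nhds hz] with w hw
    have hwc : w / c ≠ 1 := mt (div_eq_one_iff_eq hc).1 hw
    have hcomp := logDeriv_comp (f := elementaryFactor) (g := fun w ↦ w / c) (x := w)
      (differentiable_elementaryFactor _) (differentiableAt_id.div_const c)
    have hwc' : w - c ≠ 0 := sub_ne_zero.2 hw
    rw [Function.comp_def] at hcomp
    rw [hcomp, logDeriv_elementaryFactor hwc, deriv_div_const, deriv_id'']
    field_simp
  have hd := (((((hasDerivAt_id z).sub_const c).inv (sub_ne_zero.2 hz)).add_const (1 / c)).add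
    ((hasDerivAt_id z).div_const (c ^ 2))).deriv
  rw [hlog.deriv_eq]
  refine hd.trans ?_
  simp only [id_eq]
  ring

lemma hasSum_deriv_logDeriv_canonicalProduct (ha : Summable fun i ↦ (‖a i‖ ^ 3)⁻¹)
    (hz : z ∉ Set.range a \ {0}) :
    HasSum (fun i ↦ if a i = 0 then 0 else -(1 / (z - a i) ^ 2 - 1 / a i ^ 2))
      (deriv (logDeriv (canonicalProduct a)) z) := by
  have hsum := hasSum_deriv_logDeriv isOpen_univ
    (fun i ↦ (differentiable_elementaryFactor_div _).differentiableOn)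
    (hasProdLocallyUniformlyOn_canonicalProduct ha) (Set.mem_univ z)
    (fun i ↦ elementaryFactor_ne_zero (div_ne_one_of_notMem_range hz i))
    (canonicalProduct_ne_zero ha hz)
  refine hsum.congr_fun fun i ↦ ?_
  split_ifs with hi
  · simp [hi, logDeriv]
  · exact (deriv_logDeriv_elementaryFactor_div hi fun h ↦ hz ⟨⟨i, h.symm⟩, h ▸ hi⟩).symm

end CanonicalProduct

section SigmaFunction

variable (L : PeriodPair) {l z : ℂ}

local notation "σ" => wSigma L.ω₁ L.ω₂
local notation "ζ" => wZeta L.ω₁ L.ω₂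

/-- The canonical product over the whole lattice of `L`, that is, `σ(z) / z`. -/
noncomputable def sigmaProduct (L : PeriodPair) : ℂ → ℂ :=
  canonicalProduct ((↑) : L.lattice → ℂ)

lemma summable_inv_norm_lattice_cube : Summable fun l : L.lattice ↦ (‖(l : ℂ)‖ ^ 3)⁻¹ := by
  simpa using ZLattice.summable_norm_pow_inv L.lattice 3 (by simp)

lemma wSigma_eq_mul_sigmaProduct (z : ℂ) : σ z = z * sigmaProduct L z := by
  have hsupp : (fun p : ℤ × ℤ ↦
      elementaryFactor (z / (p.1 * L.ω₁ + p.2 * L.ω₂))).mulSupport ⊆ {p | p ≠ 0} := by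
    rintro p hp rfl
    simp at hp
  rw [sigmaProduct, canonicalProduct, ← L.latticeEquivProd.symm.toEquiv.tprod_eq, wSigma]
  simp only [LinearEquiv.coe_toEquiv, L.latticeEquiv_symm_apply]
  rw [← tprod_subtype_eq_of_mulSupport_subset hsupp]
  simp only [elementaryFactor, div_pow, div_div, mul_comm _ (2 : ℂ)]
  rfl

lemma differentiable_sigmaProduct : Differentiable ℂ (sigmaProduct L) :=
  differentiable_canonicalProduct (summable_inv_norm_lattice_cube L)

lemma sigmaProduct_ne_zero (hz : z ∉ (L.lattice : Set ℂ) \ {0}) : sigmaProduct L z ≠ 0 :=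
  canonicalProduct_ne_zero (summable_inv_norm_lattice_cube L) (by simpa using hz)

lemma even_sigmaProduct : (sigmaProduct L).Even :=
  canonicalProduct_neg (Equiv.neg L.lattice) fun l ↦ by simp

lemma odd_logDeriv_sigmaProduct : (logDeriv (sigmaProduct L)).Odd := fun z ↦ by
  have hneg := logDeriv_comp_neg (sigmaProduct L) z
  simp only [even_sigmaProduct L _] at hneg
  exact (neg_eq_iff_eq_neg.2 hneg).symm

lemma differentiable_wSigma : Differentiable ℂ σ := by
  rw [funext (wSigma_eq_mul_sigmaProduct L)]
  exact differentiable_id.mul (differentiable_sigmaProduct L)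

lemma odd_wSigma : (σ).Odd := fun z ↦ by
  rw [wSigma_eq_mul_sigmaProduct, wSigma_eq_mul_sigmaProduct, even_sigmaProduct L z, neg_mul]

lemma odd_wZeta : (ζ).Odd := fun z ↦ by
  have hneg := logDeriv_comp_neg σ z
  simp only [odd_wSigma L _, ← neg_one_mul (σ _)] at hneg
  rw [logDeriv_const_mul z _ (neg_ne_zero.2 one_ne_zero)] at hneg
  exact (neg_eq_iff_eq_neg.2 hneg).symm

lemma wSigma_ne_zero (hz : z ∉ L.lattice) : σ z ≠ 0 := by
  rw [wSigma_eq_mul_sigmaProduct]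
  exact mul_ne_zero (ne_of_mem_of_not_mem L.lattice.zero_mem hz).symm
    (sigmaProduct_ne_zero L fun h ↦ hz h.1)

lemma wZeta_eq_inv_add_logDeriv (hz : z ∉ L.lattice) :
    ζ z = z⁻¹ + logDeriv (sigmaProduct L) z := by
  have hz₀ : z ≠ 0 := (ne_of_mem_of_not_mem L.lattice.zero_mem hz).symm
  have hmul := logDeriv_mul (f := fun z ↦ z) z hz₀ (sigmaProduct_ne_zero L fun h ↦ hz h.1)
    differentiableAt_id (differentiable_sigmaProduct L z)
  rw [← funext (wSigma_eq_mul_sigmaProduct L), logDeriv_id', one_div] at hmul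
  exact hmul

lemma hasDerivAt_logDeriv_sigmaProduct (hz : z ∉ (L.lattice : Set ℂ) \ {0}) :
    HasDerivAt (logDeriv (sigmaProduct L)) (-L.weierstrassPExcept 0 z) z := by
  have hsum := hasSum_deriv_logDeriv_canonicalProduct (summable_inv_norm_lattice_cube L)
    (z := z) (by simpa using hz)
  have hderiv : deriv (logDeriv (sigmaProduct L)) z = -L.weierstrassPExcept 0 z := by
    refine hsum.unique ((L.hasSum_weierstrassPExcept 0 z).neg.congr_fun fun l ↦ ?_)
    split_ifs <;> simp
  rw [← hderiv]
  exact (hasDerivAt_logDeriv isOpen_univ (differentiable_sigmaProduct L).differentiableOn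
    (Set.mem_univ z) (sigmaProduct_ne_zero L hz)).differentiableAt.hasDerivAt

lemma hasDerivAt_wZeta (hz : z ∉ L.lattice) : HasDerivAt ζ (-L.weierstrassP z) z := by
  have hz₀ : z ≠ 0 := (ne_of_mem_of_not_mem L.lattice.zero_mem hz).symm
  have hderiv := (hasDerivAt_inv hz₀).add (hasDerivAt_logDeriv_sigmaProduct L fun h ↦ hz h.1)
  have hP := L.weierstrassPExcept_add 0 z
  simp only [ZeroMemClass.coe_zero] at hP
  refine (hderiv.congr_deriv ?_).congr_of_eventuallyEq ?_
  · rw [← hP]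
    simp
  · filter_upwards [L.isClosed_lattice.isOpen_compl.mem_nhds hz] with w hw
    exact wZeta_eq_inv_add_logDeriv L hw

lemma countable_lattice : (L.lattice : Set ℂ).Countable :=
  Set.countable_coe_iff.1 L.latticeEquivProd.injective.countable

lemma isPreconnected_compl_lattice : IsPreconnected (L.lattice : Set ℂ)ᶜ :=
  ((countable_lattice L).isPathConnected_compl_of_one_lt_rank
    (by simp)).isConnected.isPreconnected

/-- The quasi-period `η(l) = 2ζ(l / 2)` of the Weierstrass zeta function. The formula is only
meaningful for a period `l` such that `l / 2` is not a period, so that `ζ` has no pole there. -/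
noncomputable def quasiPeriod (ω₁ ω₂ l : ℂ) : ℂ := 2 * wZeta ω₁ ω₂ (l / 2)

local notation "η" => quasiPeriod L.ω₁ L.ω₂

lemma neg_half_notMem_lattice (hl₂ : l / 2 ∉ L.lattice) : -(l / 2) ∉ L.lattice := by
  simpa using hl₂

-- Both sides have derivative `-℘`; at `z = -l / 2` they agree because `ζ` is odd.
lemma wZeta_add_period (hl : l ∈ L.lattice) (hl₂ : l / 2 ∉ L.lattice) (hz : z ∉ L.lattice) :
    ζ (z + l) = ζ z + η l := by
  have hshift : ∀ w ∈ (L.lattice : Set ℂ)ᶜ,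
      HasDerivAt (fun w ↦ ζ (w + l)) (-L.weierstrassP w) w := fun w hw ↦ by
    have hwl : w + l ∉ L.lattice := mt (L.lattice.add_mem_iff_left hl).1 hw
    rw [← L.weierstrassP_add_coe w ⟨l, hl⟩]
    exact (hasDerivAt_wZeta L hwl).comp_add_const w l
  have hconst : ∀ w ∈ (L.lattice : Set ℂ)ᶜ,
      HasDerivAt (fun w ↦ ζ w + η l) (-L.weierstrassP w) w := fun w hw ↦
    (hasDerivAt_wZeta L hw).add_const _
  refine L.isClosed_lattice.isOpen_compl.eqOn_of_deriv_eq (isPreconnected_compl_lattice L)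
    (fun w hw ↦ (hshift w hw).differentiableAt.differentiableWithinAt)
    (fun w hw ↦ (hconst w hw).differentiableAt.differentiableWithinAt)
    (fun w hw ↦ (hshift w hw).deriv.trans (hconst w hw).deriv.symm)
    (neg_half_notMem_lattice L hl₂) ?_ hz
  rw [neg_add_eq_sub, sub_half, odd_wZeta L, quasiPeriod]
  ring

-- Both sides have the same logarithmic derivative; at `z = -l / 2` they agree because `σ` is odd.
lemma wSigma_add_period (hl : l ∈ L.lattice) (hl₂ : l / 2 ∉ L.lattice) (z : ℂ) :
    σ (z + l) = -exp (η l * (z + l / 2)) * σ z := by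
  have hσ := differentiable_wSigma L
  have hexp : Differentiable ℂ fun z ↦ exp (η l * (z + l / 2)) := by fun_prop
  have hlog : (L.lattice : Set ℂ)ᶜ.EqOn (logDeriv fun z ↦ σ (z + l))
      (logDeriv fun z ↦ exp (η l * (z + l / 2)) * σ z) := fun w hw ↦ by
    have hshift : logDeriv (fun z ↦ σ (z + l)) w = ζ (w + l) := by
      simp only [logDeriv_apply, deriv_comp_add_const]
      rfl
    have hlogexp : logDeriv (fun z ↦ exp (η l * (z + l / 2))) w = η l := by
      rw [logDeriv_apply, deriv_cexp (by fun_prop), mul_div_cancel_left₀ _ (exp_ne_zero _)]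
      simp
    rw [hshift, wZeta_add_period L hl hl₂ hw, logDeriv_mul (f := fun z ↦ exp (η l * (z + l / 2)))
      w (exp_ne_zero _) (wSigma_ne_zero L hw) (hexp w) (hσ w), hlogexp, add_comm]
    rfl
  obtain ⟨c, -, hc⟩ := (logDeriv_eqOn_iff (by fun_prop) (by fun_prop)
    L.isClosed_lattice.isOpen_compl (isPreconnected_compl_lattice L)
    (fun w hw ↦ mul_ne_zero (exp_ne_zero _) (wSigma_ne_zero L hw))
    fun w hw ↦ wSigma_ne_zero L (mt (L.lattice.add_mem_iff_left hl).1 hw)).1 hlog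
  have hc₁ : c = -1 := by
    have h := hc (neg_half_notMem_lattice L hl₂)
    simp only [Pi.smul_apply, smul_eq_mul, neg_add_eq_sub, sub_half, sub_self, mul_zero, exp_zero,
      one_mul, odd_wSigma L (l / 2)] at h
    exact mul_right_cancel₀ (wSigma_ne_zero L hl₂) (by linear_combination h)
  have hext : (fun z ↦ σ (z + l)) = c • fun z ↦ exp (η l * (z + l / 2)) * σ z :=
    Continuous.ext_on ((countable_lattice L).dense_compl ℝ)
      (hσ.continuous.comp (by fun_prop)) ((hexp.continuous.mul hσ.continuous).const_smul c) hc
  simpa [hc₁] using congrFun hext z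

end SigmaFunction

section RectangleIntegral

variable {a c r s : ℝ}

lemma mul_integral_inv_eq_log_sub_log {u v : ℂ} (h : ∀ x : ℝ, x * u + v ∈ slitPlane) :
    u * ∫ x in r..s, ((x : ℂ) * u + v)⁻¹ = log (s * u + v) - log (r * u + v) := by
  rw [← intervalIntegral.integral_const_mul]
  refine intervalIntegral.integral_eq_sub_of_hasDerivAt (f := fun x : ℝ ↦ log (x * u + v))
    (fun x _ ↦ ?_) ?_
  · have hpath : HasDerivAt (fun x : ℝ ↦ (x : ℂ) * u + v) u x := by
      simpa using (((hasDerivAt_id x).ofReal_comp).mul_const u).add_const v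
    simpa [div_eq_mul_inv] using hpath.clog_real (h x)
  · exact (continuous_const.mul (Continuous.inv₀ (by fun_prop) fun x ↦
      slitPlane_ne_zero (h x))).intervalIntegrable _ _

lemma log_sub_log_neg {z : ℂ} (hz : 0 < z.im) : log z - log (-z) = Real.pi * I := by
  rw [log, log, norm_neg, arg_neg_eq_arg_sub_pi_of_im_pos hz]
  push_cast
  ring

lemma integral_inv_half_boundary_rect (ha : 0 < a) (hc : 0 < c) :
    (∫ x in -a..a, ((x : ℂ) - c * I)⁻¹) + I * ∫ y in -c..c, ((y : ℂ) * I + a)⁻¹ =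
      Real.pi * I := by
  have hbottom := mul_integral_inv_eq_log_sub_log (r := -a) (s := a) (u := 1) (v := -(c * I))
    fun x ↦ Or.inr (by simpa using hc.ne')
  have hright := mul_integral_inv_eq_log_sub_log (r := -c) (s := c) (u := I) (v := a)
    fun x ↦ Or.inl (by simpa using ha)
  have hlog := log_sub_log_neg (z := c * I + a) (by simpa using hc)
  simp only [one_mul, mul_one, ← sub_eq_add_neg] at hbottom
  rw [hbottom, hright, ← hlog]
  push_cast
  ring_nf

lemma integral_segment_of_odd {f : ℂ → ℂ} (hf : f.Odd) (u v : ℂ) :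
    ∫ x in -r..r, f (x * u + v) = -∫ x in -r..r, f (x * u - v) := by
  have hneg := intervalIntegral.integral_comp_neg (a := -r) (b := r) fun x : ℝ ↦ f (x * u + v)
  rw [neg_neg] at hneg
  rw [← hneg, ← intervalIntegral.integral_neg]
  refine intervalIntegral.integral_congr fun x _ ↦ ?_
  rw [← hf]
  congr 1
  push_cast
  ring

-- By oddness opposite edges contribute equally, so this is half of the Cauchy-Goursat theorem.
lemma integral_half_boundary_rect_eq_zero {g : ℂ → ℂ} (hg : g.Odd)
    (hgd : DifferentiableOn ℂ g ([[-a, a]] ×ℂ [[-c, c]])) :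
    (∫ x in -a..a, g (x - c * I)) + I * ∫ y in -c..c, g (y * I + a) = 0 := by
  have hcauchy := integral_boundary_rect_eq_zero_of_differentiableOn g ⟨-a, -c⟩ ⟨a, c⟩ hgd
  have htop := integral_segment_of_odd (r := a) hg 1 (c * I)
  have hleft := integral_segment_of_odd (r := c) hg I a
  simp only [smul_eq_mul, ofReal_neg, neg_mul, mul_one, ← sub_eq_add_neg, add_comm (a : ℂ),
    neg_add_eq_sub] at hcauchy htop
  linear_combination hcauchy / 2 + htop / 2 + I * hleft / 2

lemma continuousOn_of_eqOn_inv_add {S : Set ℂ} {f g : ℂ → ℂ} (hg : ContinuousOn g S)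
    (hfg : (S \ {0}).EqOn f fun z ↦ z⁻¹ + g z) : ContinuousOn f (S \ {0}) :=
  ((continuousOn_id.inv₀ fun _ hz ↦ hz.2).add (hg.mono Set.sdiff_subset)).congr hfg

lemma integral_comp_eq_integral_inv_add {S : Set ℂ} {f g : ℂ → ℂ} {γ : ℝ → ℂ} (hγ : Continuous γ)
    (hγS : ∀ x ∈ [[r, s]], γ x ∈ S \ {0}) (hg : ContinuousOn g S)
    (hfg : (S \ {0}).EqOn f fun z ↦ z⁻¹ + g z) :
    ∫ x in r..s, f (γ x) = (∫ x in r..s, (γ x)⁻¹) + ∫ x in r..s, g (γ x) := by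
  rw [← intervalIntegral.integral_add]
  · exact intervalIntegral.integral_congr fun x hx ↦ hfg (hγS x hx)
  · exact (hγ.continuousOn.inv₀ fun x hx ↦ (hγS x hx).2).intervalIntegrable
  · exact (hg.comp hγ.continuousOn fun x hx ↦ (hγS x hx).1).intervalIntegrable

lemma integral_bottom_edge_eq_pi_mul_I {f g : ℂ → ℂ} (ha : 0 < a) (hc : 0 < c) (hf : f.Odd)
    (hg : g.Odd) (hgd : DifferentiableOn ℂ g ([[-a, a]] ×ℂ [[-c, c]]))
    (hfg : ([[-a, a]] ×ℂ [[-c, c]] \ {0}).EqOn f fun z ↦ z⁻¹ + g z)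
    (hper : ∀ y ∈ [[-c, c]], f (y * I + a) = f (y * I - a)) :
    ∫ x in -a..a, f (x - c * I) = Real.pi * I := by
  have hright : ∫ y in -c..c, f (y * I + a) = 0 := by
    have hodd := integral_segment_of_odd (r := c) hf I a
    rw [← intervalIntegral.integral_congr hper] at hodd
    exact CharZero.eq_neg_self_iff.1 hodd
  have hbottom_split := integral_comp_eq_integral_inv_add (γ := fun x : ℝ ↦ x - c * I)
    (by fun_prop) (fun x hx ↦ ⟨by simpa [mem_reProdIm] using hx, fun h ↦ hc.ne' <| by
      simpa using congrArg im h⟩) hgd.continuousOn hfg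
  have hright_split := integral_comp_eq_integral_inv_add (γ := fun y : ℝ ↦ y * I + a)
    (by fun_prop) (fun y hy ↦ ⟨by simpa [mem_reProdIm] using hy, fun h ↦ ha.ne' <| by
      simpa using congrArg re h⟩) hgd.continuousOn hfg
  linear_combination hbottom_split - I * hright + I * hright_split
    + integral_inv_half_boundary_rect ha hc + integral_half_boundary_rect_eq_zero hg hgd

lemma integral_comp_add_right_of_periodic {h : ℝ → ℂ} (hh : h.Periodic (s - r)) (t : ℝ) :
    ∫ x in r..s, h (x + t) = ∫ x in r..s, h x := by
  have hper := hh.intervalIntegral_add_eq (r + t) r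
  rwa [add_sub_cancel, show r + t + (s - r) = s + t by ring,
    ← intervalIntegral.integral_comp_add_right] at hper

lemma integral_bottom_edge_add_eq_integral_top_edge {f : ℂ → ℂ} {τ q : ℂ}
    (hint : IntervalIntegrable (fun x : ℝ ↦ f (x - c * I)) volume r s)
    (hper : (fun x : ℝ ↦ f (x + c * I)).Periodic (s - r)) (hτ : τ.im = 2 * c)
    (hq : ∀ w, w.im = -c → f (w + τ) = f w + q) :
    (∫ x in r..s, f (x - c * I)) + (s - r) * q = ∫ x in r..s, f (x + c * I) := by
  have hshift (x : ℝ) : f (↑(x + τ.re) + c * I) = f (x - c * I) + q := by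
    rw [← hq _ (by simp)]
    congr 1
    apply Complex.ext
    · simp
    · simp [hτ]
      ring
  rw [← integral_comp_add_right_of_periodic hper τ.re]
  simp only [hshift]
  rw [intervalIntegral.integral_add hint intervalIntegrable_const]
  simp

lemma increment_eq_neg_two_pi_mul_I_of_odd_of_simple_pole {f g : ℂ → ℂ} {τ q : ℂ}
    (hτ : 0 < τ.im) (hf : f.Odd) (hg : g.Odd)
    (hgd : DifferentiableOn ℂ g ([[-(1 / 2), 1 / 2]] ×ℂ [[-(τ.im / 2), τ.im / 2]]))
    (hfg : ([[-(1 / 2), 1 / 2]] ×ℂ [[-(τ.im / 2), τ.im / 2]] \ {0}).EqOn f fun z ↦ z⁻¹ + g z)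
    (hone : ∀ w ∈ integerComplement, |w.im| ≤ τ.im / 2 → f (w + 1) = f w)
    (hq : ∀ w, w.im = -(τ.im / 2) → f (w + τ) = f w + q) :
    q = -(2 * Real.pi * I) := by
  set c := τ.im / 2 with hc
  have hc₀ : 0 < c := by positivity
  have hbottom : ∫ x in -(1 / 2 : ℝ)..1 / 2, f (x - c * I) = Real.pi * I := by
    refine integral_bottom_edge_eq_pi_mul_I (by norm_num) hc₀ hf hg hgd hfg fun y hy ↦ ?_
    rw [← hone (y * I - (1 / 2 : ℝ))]
    · congr 1
      push_cast
      ring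
    · rintro ⟨m, hm⟩
      have hre : (m : ℝ) = -(1 / 2) := by simpa using congrArg re hm
      have hint : 2 * m = -1 := by
        rify
        linarith
      omega
    · simpa [Set.uIcc_of_le (neg_le_self hc₀.le), abs_le] using hy
  have htop : ∫ x in -(1 / 2 : ℝ)..1 / 2, f (x + c * I) = -(Real.pi * I) := by
    have hodd := integral_segment_of_odd (r := 1 / 2) hf 1 (c * I)
    simpa only [mul_one, hbottom] using hodd
  have hperiodic : (fun x : ℝ ↦ f (x + c * I)).Periodic (1 / 2 - -(1 / 2)) := fun x ↦ by
    have hw : (x : ℂ) + c * I ∈ integerComplement := by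
      rintro ⟨m, hm⟩
      exact hc₀.ne (by simpa using congrArg im hm)
    refine Eq.trans (congrArg f ?_) (hone _ hw (by simp [abs_of_pos hc₀]))
    push_cast
    ring
  have hcont : IntervalIntegrable (fun x : ℝ ↦ f (x - c * I)) volume (-(1 / 2)) (1 / 2) :=
    ((continuousOn_of_eqOn_inv_add hgd.continuousOn hfg).comp (by fun_prop) fun x hx ↦
      ⟨by simpa [mem_reProdIm] using hx, fun h ↦ hc₀.ne' <| by
        simpa using congrArg im h⟩).intervalIntegrable
  have hshift := integral_bottom_edge_add_eq_integral_top_edge hcont hperiodic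
    (by rw [hc]; ring) hq
  norm_num at hshift
  linear_combination hshift - hbottom + htop

end RectangleIntegral

section LegendreRelation

variable (L : PeriodPair) {w : ℂ}

local notation "ζ" => wZeta L.ω₁ L.ω₂
local notation "η" => quasiPeriod L.ω₁ L.ω₂

lemma ω₁_ne_zero : L.ω₁ ≠ 0 := L.indep.ne_zero 0

lemma exists_int_eq_of_mul_mem_lattice (hw : L.ω₁ * w ∈ L.lattice)
    (him : |w.im| < (L.ω₂ / L.ω₁).im) : ∃ m : ℤ, w = m := by
  obtain ⟨m, n, hmn⟩ := L.mem_lattice.1 hw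
  have hτ : 0 < (L.ω₂ / L.ω₁).im := (abs_nonneg _).trans_lt him
  have hdiv : w = m + n * (L.ω₂ / L.ω₁) := by
    have := ω₁_ne_zero L
    field_simp
    linear_combination -hmn
  have hn : n = 0 := by
    have hwim : w.im = n * (L.ω₂ / L.ω₁).im := by
      rw [hdiv]
      simp
    rw [hwim, abs_mul, abs_of_pos hτ] at him
    exact Int.abs_lt_one_iff.1 (by exact_mod_cast (mul_lt_iff_lt_one_left hτ).1 him)
  exact ⟨m, by simp [hdiv, hn]⟩

/-- The Weierstrass zeta function of the rescaled lattice `ℤ + (ω₂ / ω₁)ℤ`, corrected by a linear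
term to have period `1`. -/
noncomputable def normalizedZeta (L : PeriodPair) (w : ℂ) : ℂ :=
  L.ω₁ * (wZeta L.ω₁ L.ω₂ (L.ω₁ * w) - quasiPeriod L.ω₁ L.ω₂ L.ω₁ * w)

/-- The part of `normalizedZeta` that is regular at the origin, where `normalizedZeta` has its
pole `w⁻¹`. -/
noncomputable def normalizedZetaReg (L : PeriodPair) (w : ℂ) : ℂ :=
  L.ω₁ * (logDeriv (sigmaProduct L) (L.ω₁ * w) - quasiPeriod L.ω₁ L.ω₂ L.ω₁ * w)

lemma odd_normalizedZeta : (normalizedZeta L).Odd := fun w ↦ by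
  rw [normalizedZeta, normalizedZeta, mul_neg, odd_wZeta L]
  ring

lemma odd_normalizedZetaReg : (normalizedZetaReg L).Odd := fun w ↦ by
  rw [normalizedZetaReg, normalizedZetaReg, mul_neg, odd_logDeriv_sigmaProduct L]
  ring

lemma normalizedZeta_eq_inv_add (hw : L.ω₁ * w ∉ L.lattice) :
    normalizedZeta L w = w⁻¹ + normalizedZetaReg L w := by
  have := ω₁_ne_zero L
  rw [normalizedZeta, normalizedZetaReg, wZeta_eq_inv_add_logDeriv L hw]
  field_simp
  ring

lemma differentiableAt_normalizedZetaReg (hw : L.ω₁ * w ∉ (L.lattice : Set ℂ) \ {0}) :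
    DifferentiableAt ℂ (normalizedZetaReg L) w := by
  have hlog := (hasDerivAt_logDeriv_sigmaProduct L hw).differentiableAt
  have hcomp : DifferentiableAt ℂ (fun w ↦ logDeriv (sigmaProduct L) (L.ω₁ * w)) w :=
    hlog.comp w (by fun_prop)
  exact (hcomp.sub (by fun_prop)).const_mul _

lemma normalizedZeta_add_one (hw : L.ω₁ * w ∉ L.lattice) :
    normalizedZeta L (w + 1) = normalizedZeta L w := by
  rw [normalizedZeta, normalizedZeta, mul_add, mul_one,
    wZeta_add_period L L.ω₁_mem_lattice L.ω₁_div_two_notMem_lattice hw]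
  ring

lemma normalizedZeta_add_div (hw : L.ω₁ * w ∉ L.lattice) :
    normalizedZeta L (w + L.ω₂ / L.ω₁) =
      normalizedZeta L w + (L.ω₁ * η L.ω₂ - η L.ω₁ * L.ω₂) := by
  rw [normalizedZeta, normalizedZeta, mul_add, mul_div_cancel₀ _ (ω₁_ne_zero L),
    wZeta_add_period L L.ω₂_mem_lattice L.ω₂_div_two_notMem_lattice hw]
  have := ω₁_ne_zero L
  field_simp
  ring

lemma eq_zero_of_mul_mem_lattice_of_mem_rect (hτ : 0 < (L.ω₂ / L.ω₁).im)
    (hw : L.ω₁ * w ∈ L.lattice)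
    (hrect : w ∈ [[-(1 / 2), 1 / 2]] ×ℂ [[-((L.ω₂ / L.ω₁).im / 2), (L.ω₂ / L.ω₁).im / 2]]) :
    w = 0 := by
  rw [mem_reProdIm, Set.uIcc_of_le (by norm_num), Set.uIcc_of_le (by linarith), Set.mem_Icc,
    Set.mem_Icc, ← abs_le, ← abs_le] at hrect
  obtain ⟨m, rfl⟩ := exists_int_eq_of_mul_mem_lattice L hw (hrect.2.trans_lt (half_lt_self hτ))
  have hm : |(m : ℝ)| < 1 := by
    simpa using hrect.1.trans_lt one_half_lt_one
  exact_mod_cast Int.abs_lt_one_iff.1 (by exact_mod_cast hm)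

lemma legendre_relation (hτ : 0 < (L.ω₂ / L.ω₁).im) :
    η L.ω₁ * L.ω₂ - η L.ω₂ * L.ω₁ = 2 * Real.pi * I := by
  have hzero (w) := eq_zero_of_mul_mem_lattice_of_mem_rect L hτ (w := w)
  have hint (w : ℂ) (hw : w ∈ integerComplement) (him : |w.im| ≤ (L.ω₂ / L.ω₁).im / 2) :
      L.ω₁ * w ∉ L.lattice := fun hmem ↦ by
    obtain ⟨m, rfl⟩ := exists_int_eq_of_mul_mem_lattice L hmem (him.trans_lt (half_lt_self hτ))
    exact hw ⟨m, rfl⟩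
  have hincr := increment_eq_neg_two_pi_mul_I_of_odd_of_simple_pole hτ (odd_normalizedZeta L)
    (odd_normalizedZetaReg L)
    (fun w hw ↦ (differentiableAt_normalizedZetaReg L fun h ↦
      h.2 (by simp [hzero w h.1 hw])).differentiableWithinAt)
    (fun w hw ↦ normalizedZeta_eq_inv_add L fun h ↦ hw.2 (hzero w h hw.1))
    (fun w hw him ↦ normalizedZeta_add_one L (hint w hw him))
    (fun w him ↦ normalizedZeta_add_div L (hint w ?_ ?_))
  · linear_combination -hincr
  · rintro ⟨m, rfl⟩
    exact (half_pos hτ).ne' (by simpa using him)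
  · rw [him, abs_neg, abs_of_pos (half_pos hτ)]

end LegendreRelation

section GaussianNormalization

variable (L : PeriodPair) {b κ l z : ℂ}

local notation "σ" => wSigma L.ω₁ L.ω₂
local notation "η" => quasiPeriod L.ω₁ L.ω₂

lemma two_mul_add_quasiPeriod_ω₂ (hτ : 0 < (L.ω₂ / L.ω₁).im)
    (hκ : κ * (conj L.ω₁ * L.ω₂).im = Real.pi / 2)
    (h₁ : 2 * b * L.ω₁ + η L.ω₁ = 2 * κ * conj L.ω₁) :
    2 * b * L.ω₂ + η L.ω₂ = 2 * κ * conj L.ω₂ := by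
  have hconj : conj L.ω₁ * L.ω₂ - conj L.ω₂ * L.ω₁ = 2 * (conj L.ω₁ * L.ω₂).im * I := by
    simpa [mul_comm] using sub_conj (conj L.ω₁ * L.ω₂)
  refine mul_left_cancel₀ (ω₁_ne_zero L) ?_
  linear_combination L.ω₂ * h₁ - legendre_relation L hτ + 2 * κ * hconj + 4 * I * hκ

lemma two_mul_bconst_add_quasiPeriod {ω₁ : ℂ} (ω₂ : ℂ) (hω₁ : ω₁ ≠ 0) :
    2 * bconst ω₁ ω₂ * ω₁ + quasiPeriod ω₁ ω₂ ω₁ = 2 * ω₁ := by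
  rw [bconst, lambda1, quasiPeriod]
  field_simp
  ring

lemma exp_mul_sq_mul_wSigma_eq (hl : l ∈ L.lattice) (hl₂ : l / 2 ∉ L.lattice)
    (hb : 2 * b * l + η l = 2 * κ * conj l) (z : ℂ) :
    exp (b * z ^ 2) * σ z =
      -exp (-2 * κ * conj l * z - κ * ‖l‖ ^ 2) * (exp (b * (z + l) ^ 2) * σ (z + l)) := by
  have hexp : exp (b * z ^ 2) = exp (-2 * κ * conj l * z - κ * ‖l‖ ^ 2) *
      exp (b * (z + l) ^ 2) * exp (η l * (z + l / 2)) := by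
    rw [← exp_add, ← exp_add, ← conj_mul']
    congr 1
    linear_combination -(z + l / 2) * hb
  rw [wSigma_add_period L hl hl₂, hexp]
  ring

lemma periodic_exp_mul_norm {f : ℂ → ℂ} {κ : ℝ}
    (hf : ∀ z, f z = -exp (-2 * κ * conj l * z - κ * ‖l‖ ^ 2) * f (z + l)) :
    (fun z ↦ Real.exp (-κ * ‖z‖ ^ 2) * ‖f z‖).Periodic l := fun z ↦ by
  have hsq : ‖z + l‖ ^ 2 = ‖z‖ ^ 2 + 2 * (conj l * z).re + ‖l‖ ^ 2 := by
    rw [← normSq_eq_norm_sq, ← normSq_eq_norm_sq, ← normSq_eq_norm_sq, normSq_add, mul_comm z]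
    ring
  have hre : (-2 * κ * conj l * z - κ * ‖l‖ ^ 2 : ℂ).re =
      -2 * κ * (conj l * z).re - κ * ‖l‖ ^ 2 := by
    norm_cast
    rw [mul_assoc, sub_re, re_ofReal_mul, ofReal_re]
  beta_reduce
  rw [hf z, norm_mul, norm_neg, norm_exp, ← mul_assoc, ← Real.exp_add, hsq, hre]
  congr 2
  ring

lemma linearIndependent_of_div_im_ne_zero {ω₁ ω₂ : ℂ} (h : (ω₂ / ω₁).im ≠ 0) :
    LinearIndependent ℝ ![ω₁, ω₂] := by
  have hω₁ : ω₁ ≠ 0 := fun h₀ ↦ h (by simp [h₀])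
  refine (LinearIndependent.pair_iff' hω₁).2 fun t ht ↦ h ?_
  simp [← ht, hω₁]

end GaussianNormalization

/-- periodicity-type identity for the modified sigma function,
and the `Λ`-periodicity of `e^{−|z|²}|σ_*(z)|`. -/
theorem sigmaStar_periodicity (ω₁ ω₂ : ℂ)
    (h1 : ω₁.im = 0) (h1' : 0 < ω₁.re) (h2 : 0 < ω₂.im)
    (harea : ω₁.re * ω₂.im = Real.pi / 2) :
    (∀ ω ∈ ({ω₁, ω₂} : Set ℂ), ∀ z : ℂ,
      sigmaStar ω₁ ω₂ z =
        -Complex.exp (-2 * (starRingEnd ℂ) ω * z - ((‖ω‖ ^ 2 : ℝ) : ℂ)) *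
          sigmaStar ω₁ ω₂ (z + ω)) ∧
    (∀ ω ∈ latticeSet ω₁ ω₂, ∀ z : ℂ,
      Real.exp (-‖z + ω‖ ^ 2) * ‖sigmaStar ω₁ ω₂ (z + ω)‖ =
        Real.exp (-‖z‖ ^ 2) * ‖sigmaStar ω₁ ω₂ z‖) := by
  lift ω₁ to ℝ using h1
  rw [ofReal_re] at h1' harea
  have hτ : 0 < (ω₂ / ω₁).im := by simpa using div_pos h2 h1'
  let L : PeriodPair := ⟨ω₁, ω₂, linearIndependent_of_div_im_ne_zero hτ.ne'⟩
  have hb₁ : 2 * bconst ω₁ ω₂ * ω₁ + quasiPeriod ω₁ ω₂ ω₁ = 2 * 1 * conj (ω₁ : ℂ) := by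
    simpa using two_mul_bconst_add_quasiPeriod ω₂ (ofReal_ne_zero.2 h1'.ne')
  have hb₂ := two_mul_add_quasiPeriod_ω₂ L hτ
    (by simpa [L, ← ofReal_mul] using congrArg ofReal harea) hb₁
  have hquasi : ∀ ω ∈ ({↑ω₁, ω₂} : Set ℂ), ∀ z, sigmaStar ω₁ ω₂ z =
      -exp (-2 * conj ω * z - ((‖ω‖ ^ 2 : ℝ) : ℂ)) * sigmaStar ω₁ ω₂ (z + ω) := by
    rintro ω (rfl | rfl) z
    · simpa only [sigmaStar, L, mul_one, one_mul, ofReal_pow] using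
        exp_mul_sq_mul_wSigma_eq L L.ω₁_mem_lattice L.ω₁_div_two_notMem_lattice hb₁ z
    · simpa only [sigmaStar, L, mul_one, one_mul, ofReal_pow] using
        exp_mul_sq_mul_wSigma_eq L L.ω₂_mem_lattice L.ω₂_div_two_notMem_lattice hb₂ z
  have hperiodic (ω) (hω : ω ∈ ({↑ω₁, ω₂} : Set ℂ)) :
      (fun z ↦ Real.exp (-‖z‖ ^ 2) * ‖sigmaStar ω₁ ω₂ z‖).Periodic ω := by
    simpa using periodic_exp_mul_norm (κ := 1) (by simpa using hquasi ω hω)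
  refine ⟨hquasi, ?_⟩
  rintro _ ⟨m, n, rfl⟩
  exact ((hperiodic ω₁ (.inl rfl)).int_mul m).add_period ((hperiodic ω₂ (.inr rfl)).int_mul n)
end
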